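/- arXiv:math/0312280 — 7 statements merged into one kernel-verified Lean document; each statement's English description precedes it below -/
import Mathlib

section
/- Let k be an algebraically closed field and let φ : A → B be a homomorphism of finitely generated commutative k-algebras, corresponding to a morphism f : Spec B → Spec A of finite type affine k-schemes. Then there exists a positive integer n such that for every prime ideal p of A, every nilpotent element of the fiber ring B ⊗_A κ(p) has n-th power equal to zero, where κ(p) denotes the residue field of A at p (the fraction field of A/p). In other words, the radical index of every fiber of f is at most n. -/
open TensorProduct

set_option linter.style.haveILetI false

namespace RadIdx

universe u v w

theorem flat_of_ext {A M' M M'' : Type*} [CommRing A] [AddCommGroup M'] [AddCommGroup M]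
    [AddCommGroup M''] [Module A M'] [Module A M] [Module A M'']
    (i : M' →ₗ[A] M) (q : M →ₗ[A] M'') (hq : Function.Surjective q)
    (hi : Function.Injective i) (hex : Function.Exact i q)
    [Module.Flat A M'] [Module.Flat A M''] : Module.Flat A M := by
  rw [Module.Flat.iff_rTensor_injective']
  intro I
  rw [← LinearMap.ker_eq_bot, LinearMap.ker_eq_bot']
  intro z hz
  have h1 : (I.subtype.rTensor M'') (q.lTensor I z) = 0 := by
    have : (I.subtype.rTensor M'') (q.lTensor I z) = q.lTensor A (I.subtype.rTensor M z) := by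
      rw [← LinearMap.comp_apply, ← LinearMap.comp_apply, LinearMap.rTensor_comp_lTensor,
        LinearMap.lTensor_comp_rTensor]
    rw [this, hz, map_zero]
  have h2 : q.lTensor I z = 0 := by
    apply Module.Flat.rTensor_preserves_injective_linearMap (M := M'') I.subtype
      Subtype.val_injective
    rw [h1, map_zero]
  obtain ⟨y, rfl⟩ := (lTensor_exact I hex hq z).1 h2
  have h3 : i.lTensor A (I.subtype.rTensor M' y) = 0 := by
    rw [← hz, ← LinearMap.comp_apply, ← LinearMap.comp_apply, LinearMap.rTensor_comp_lTensor,
        LinearMap.lTensor_comp_rTensor]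
  have h4 : I.subtype.rTensor M' y = 0 := by
    apply Module.Flat.lTensor_preserves_injective_linearMap (M := A) i hi
    rw [h3, map_zero]
  have h5 : y = 0 := by
    apply Module.Flat.rTensor_preserves_injective_linearMap (M := M') I.subtype
      Subtype.val_injective
    rw [h4, map_zero]
  rw [h5, map_zero]

theorem flat_of_union {A M : Type*} [CommRing A] [AddCommGroup M] [Module A M]
    {N : ℕ → Type*} [∀ n, AddCommGroup (N n)] [∀ n, Module A (N n)]
    (φ : ∀ n, N n →ₗ[A] M) (hinj : ∀ n, Function.Injective (φ n))
    (hmono : Monotone fun n => LinearMap.range (φ n))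
    (hunion : ∀ x, ∃ n, x ∈ LinearMap.range (φ n))
    (hflat : ∀ n, Module.Flat A (N n)) : Module.Flat A M := by
  apply Module.Flat.of_forall_isTrivialRelation
  intro l f x hx
  choose e he using fun i => hunion (x i)
  let n := Finset.univ.sup e
  have : ∀ i, x i ∈ LinearMap.range (φ n) := fun i =>
    hmono (Finset.le_sup (f := e) (Finset.mem_univ i)) (he i)
  choose y hy using this
  have h0 : ∑ i, f i • y i = 0 := by
    apply hinj n
    simp [hy, hx]
  obtain ⟨k, a, z, h1, h2⟩ := Module.Flat.isTrivialRelation_of_sum_smul_eq_zero h0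
  refine ⟨k, a, fun j => φ n (z j), fun i => ?_, h2⟩
  rw [← hy, h1 i]; simp

/-- generic flatness of a module -/
def GenFlat (A : Type u) [CommRing A] (M : Type w) [AddCommGroup M] [Module A M] (f : A) : Prop :=
  Module.Flat A (Localization.Away f ⊗[A] M)

theorem GenFlat.mul {A : Type u} [CommRing A] {M : Type w} [AddCommGroup M] [Module A M] {f : A}
    (h : GenFlat A M f) {f' : A} (hd : f ∣ f') : GenFlat A M f' := by
  unfold GenFlat at *
  have hu : IsUnit (algebraMap A (Localization.Away f') f) :=
    isUnit_of_dvd_unit (map_dvd _ hd) (IsLocalization.Away.algebraMap_isUnit f')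
  letI : Algebra (Localization.Away f) (Localization.Away f') :=
    (IsLocalization.Away.lift f hu).toAlgebra
  haveI : IsScalarTower A (Localization.Away f) (Localization.Away f') :=
    IsScalarTower.of_algebraMap_eq fun x => by
      rw [RingHom.algebraMap_toAlgebra, IsLocalization.Away.lift_eq]
  haveI : Module.Flat (Localization.Away f) (Localization.Away f ⊗[A] M) :=
    (Module.flat_iff_of_isLocalization (Localization.Away f) (.powers f) _).2 h
  haveI : Module.Flat (Localization.Away f') (Localization.Away f' ⊗[A] M) :=
    Module.Flat.of_linearEquiv (M :=
      Localization.Away f' ⊗[Localization.Away f] (Localization.Away f ⊗[A] M))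
      (AlgebraTensorModule.cancelBaseChange A (Localization.Away f) (Localization.Away f') _ _).symm
  exact Module.Flat.trans A (Localization.Away f') _

theorem GenFlat.ext {A M' M M'' : Type*} [CommRing A] [AddCommGroup M'] [AddCommGroup M]
    [AddCommGroup M''] [Module A M'] [Module A M] [Module A M'']
    (i : M' →ₗ[A] M) (q : M →ₗ[A] M'') (hq : Function.Surjective q)
    (hi : Function.Injective i) (hex : Function.Exact i q) {f : A}
    (h1 : GenFlat A M' f) (h2 : GenFlat A M'' f) : GenFlat A M f := by
  unfold GenFlat at *
  exact flat_of_ext (i.lTensor (Localization.Away f)) (q.lTensor _) (LinearMap.lTensor_surjective _ hq)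
    (Module.Flat.lTensor_preserves_injective_linearMap i hi) (lTensor_exact _ hex hq)

theorem GenFlat.equiv {A M M' : Type*} [CommRing A] [AddCommGroup M'] [AddCommGroup M]
    [Module A M'] [Module A M] (e : M ≃ₗ[A] M') {f : A} (h : GenFlat A M f) : GenFlat A M' f := by
  unfold GenFlat at *
  exact Module.Flat.of_linearEquiv (e.lTensor (Localization.Away f)).symm

theorem GenFlat.union {A M : Type*} [CommRing A] [AddCommGroup M] [Module A M]
    (F : ℕ → Submodule A M) (hmono : Monotone F) (hunion : ∀ x, ∃ n, x ∈ F n) {f : A}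
    (hflat : ∀ n, GenFlat A (F n) f) : GenFlat A M f := by
  unfold GenFlat at *
  have hm : Monotone fun n => LinearMap.range ((F n).subtype.lTensor (Localization.Away f)) := by
    intro m n hmn
    have : (F m).subtype = (F n).subtype ∘ₗ Submodule.inclusion (hmono hmn) := rfl
    simp only [this, LinearMap.lTensor_comp]
    exact LinearMap.range_comp_le_range _ _
  refine flat_of_union (fun n => (F n).subtype.lTensor (Localization.Away f))
    (fun n => Module.Flat.lTensor_preserves_injective_linearMap _ Subtype.val_injective) hm
    ?_ hflat
  intro x
  induction x with
  | zero => exact ⟨0, zero_mem _⟩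
  | tmul a m =>
    obtain ⟨n, hn⟩ := hunion m
    exact ⟨n, a ⊗ₜ ⟨m, hn⟩, rfl⟩
  | add x y hx hy =>
    obtain ⟨n, hn⟩ := hx
    obtain ⟨m, hm'⟩ := hy
    exact ⟨max n m, add_mem (hm (le_max_left _ _) hn) (hm (le_max_right _ _) hm')⟩

/-- `R` is such that every finite module is generically flat over `A`. -/
def GF (A : Type u) (R : Type v) [CommRing A] [CommRing R] [Algebra A R] : Prop :=
  ∀ (M : Type w) [AddCommGroup M] [Module A M] [Module R M] [IsScalarTower A R M]
    [Module.Finite R M], ∃ f : A, f ≠ 0 ∧ GenFlat A M f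

theorem GF.of_surjective {A R S : Type*} [CommRing A] [CommRing R] [CommRing S] [Algebra A R]
    [Algebra A S] (φ : R →ₐ[A] S) (hφ : Function.Surjective φ) (h : GF.{_, _, w} A R) :
    GF.{_, _, w} A S := by
  intro M _ _ _ _ _
  letI : Algebra R S := φ.toRingHom.toAlgebra
  letI : Module R M := Module.compHom M φ.toRingHom
  haveI : IsScalarTower R S M := IsScalarTower.of_algebraMap_smul fun r x => rfl
  haveI : IsScalarTower A R M := IsScalarTower.of_algebraMap_smul fun r x => by
    change φ (algebraMap A R r) • x = r • x
    rw [AlgHom.commutes, algebraMap_smul]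
  haveI : Module.Finite R S := Module.Finite.of_surjective (Algebra.linearMap R S) hφ
  haveI : Module.Finite R M := Module.Finite.trans S M
  exact h M

theorem genFlat_of_finite (A : Type*) [CommRing A] [IsDomain A] [IsNoetherianRing A]
    (M : Type*) [AddCommGroup M] [Module A M] [Module.Finite A M] :
    ∃ f : A, f ≠ 0 ∧ GenFlat A M f := by
  haveI : Module.FinitePresentation A M := Module.finitePresentation_of_finite A M
  obtain ⟨r, hr, h1, -⟩ := Module.FinitePresentation.exists_free_localizedModule_powers
    (nonZeroDivisors A) (LocalizedModule.mkLinearMap (nonZeroDivisors A) M)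
    (FractionRing A)
  refine ⟨r, nonZeroDivisors.ne_zero hr, ?_⟩
  unfold GenFlat
  haveI : Module.Flat (Localization.Away r) (Localization.Away r ⊗[A] M) :=
    Module.Flat.of_linearEquiv (LocalizedModule.equivTensorProduct (.powers r) M).symm
  exact Module.Flat.trans A (Localization.Away r) _

theorem GF.base (A : Type*) [CommRing A] [IsDomain A] [IsNoetherianRing A] : GF.{_, _, w} A A := by
  intro M _ inst1 inst2 inst _
  have hinst : inst1 = inst2 := by
    refine Module.ext' _ _ fun a m => ?_
    have := inst.smul_assoc a (1 : A) m
    rw [@one_smul A M _ inst2.toMulAction, smul_eq_mul, mul_one] at this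
    exact this.symm
  subst hinst
  exact genFlat_of_finite A M

theorem GenFlat.ext_sub {A R L : Type*} [CommRing A] [CommRing R] [Algebra A R] [AddCommGroup L]
    [Module A L] [Module R L] [IsScalarTower A R L] (N : Submodule R L) {f : A}
    (h1 : GenFlat A N f) (h2 : GenFlat A (L ⧸ N) f) : GenFlat A L f := by
  have a1 : Function.Surjective (N.mkQ.restrictScalars A) := N.mkQ_surjective
  have a2 : Function.Injective (N.subtype.restrictScalars A) := N.injective_subtype
  have a3 : Function.Exact (N.subtype.restrictScalars A) (N.mkQ.restrictScalars A) :=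
    LinearMap.exact_subtype_mkQ N
  exact GenFlat.ext _ _ a1 a2 a3 h1 h2

section poly

variable {R M : Type*} [CommRing R] [AddCommGroup M] [Module R M] (ξ : M →ₗ[R] M)
  (M0 : Submodule R M)

/-- the filtration -/
def Fil : ℕ → Submodule R M
  | 0 => ⊥
  | n + 1 => Fil n ⊔ M0.map (ξ ^ n)

theorem Fil_le (n : ℕ) : Fil ξ M0 n ≤ Fil ξ M0 (n + 1) := le_sup_left

theorem Fil_mono : Monotone (Fil ξ M0) := monotone_nat_of_le_succ (Fil_le ξ M0)

theorem Fil_map (n : ℕ) : (Fil ξ M0 n).map ξ ≤ Fil ξ M0 (n + 1) := by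
  induction n with
  | zero => simp [Fil]
  | succ n ih =>
    rw [show Fil ξ M0 (n + 1) = Fil ξ M0 n ⊔ M0.map (ξ ^ n) from rfl, Submodule.map_sup]
    refine sup_le (ih.trans (Fil_le _ _ _)) ?_
    rw [← Submodule.map_comp]
    have : ξ ∘ₗ (ξ ^ n) = ξ ^ (n + 1) := by rw [pow_succ']; rfl
    rw [this]
    exact le_sup_right

theorem Fil_pow (n : ℕ) {m : ℕ} {x : M} (hx : x ∈ Fil ξ M0 m) : (ξ ^ n) x ∈ Fil ξ M0 (m + n) := by
  induction n with
  | zero => simpa using hx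
  | succ n ih =>
    rw [pow_succ']
    exact Fil_map ξ M0 _ ⟨_, ih, rfl⟩

/-- the kernels -/
def Ker (n : ℕ) : Submodule R M0 := (Fil ξ M0 n).comap ((ξ ^ n) ∘ₗ M0.subtype)

theorem Ker_mono : Monotone (Ker ξ M0) := by
  refine monotone_nat_of_le_succ fun n x hx => ?_
  have h : (ξ ^ n) (x : M) ∈ Fil ξ M0 n := hx
  change (ξ ^ (n + 1)) (x : M) ∈ Fil ξ M0 (n + 1)
  rw [pow_succ']
  exact Fil_map ξ M0 _ ⟨_, h, rfl⟩

/-- map onto graded pieces -/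
def grMap (n : ℕ) : M0 →ₗ[R] (Fil ξ M0 (n + 1) ⧸ (Fil ξ M0 n).submoduleOf (Fil ξ M0 (n + 1))) :=
  (Submodule.mkQ _) ∘ₗ (((ξ ^ n) ∘ₗ M0.subtype).codRestrict (Fil ξ M0 (n + 1))
    (fun x => (le_sup_right : _ ≤ Fil ξ M0 n ⊔ M0.map (ξ ^ n)) ⟨x, x.2, rfl⟩))

theorem grMap_ker (n : ℕ) : LinearMap.ker (grMap ξ M0 n) = Ker ξ M0 n := by
  ext x
  rw [LinearMap.mem_ker, grMap, LinearMap.comp_apply, Submodule.mkQ_apply,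
    Submodule.Quotient.mk_eq_zero]
  rfl

theorem grMap_surj (n : ℕ) : Function.Surjective (grMap ξ M0 n) := by
  intro y
  obtain ⟨⟨y, hy⟩, rfl⟩ := Submodule.mkQ_surjective _ y
  obtain ⟨a, ha, b, ⟨c, hc, rfl⟩, rfl⟩ := Submodule.mem_sup.1
    (show y ∈ Fil ξ M0 n ⊔ M0.map (ξ ^ n) from hy)
  refine ⟨⟨c, hc⟩, ?_⟩
  rw [grMap, LinearMap.comp_apply, Submodule.mkQ_apply, Submodule.mkQ_apply,
    Submodule.Quotient.eq]
  change (ξ ^ n) c - (a + (ξ ^ n) c) ∈ Fil ξ M0 n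
  simpa using ha

end poly

theorem GF.polynomial {A R : Type*} [CommRing A] [CommRing R] [IsDomain A] [Algebra A R]
    [IsNoetherianRing R]
    (h : GF.{_, _, w} A R) : GF.{_, _, w} A (Polynomial R) := by
  intro M _ _ _ _ hfin
  letI : Module R M := Module.compHom M (Polynomial.C (R := R))
  haveI : IsScalarTower R (Polynomial R) M := IsScalarTower.of_algebraMap_smul fun r x => rfl
  haveI : IsScalarTower A R M := IsScalarTower.of_algebraMap_smul fun r x => by
    change Polynomial.C (algebraMap A R r) • x = r • x
    exact algebraMap_smul (Polynomial R) r x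
  obtain ⟨S, hS⟩ := hfin.fg_top
  let M0 : Submodule R M := Submodule.span R (S : Set M)
  haveI : Module.Finite R M0 := Module.Finite.iff_fg.2 ⟨S, rfl⟩
  let ξ : M →ₗ[R] M := LinearMap.restrictScalars R
    (LinearMap.lsmul (Polynomial R) M (Polynomial.X))
  have hξ : ∀ n x, (ξ ^ n) x = (Polynomial.X ^ n : Polynomial R) • x := by
    intro n x
    induction n with
    | zero => simp
    | succ n ih => rw [pow_succ', Module.End.mul_apply, ih, pow_succ', mul_smul]; rfl
  have hunion : ∀ x, ∃ n, x ∈ Fil ξ M0 n := by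
    intro x
    have hx : x ∈ Submodule.span (Polynomial R) (S : Set M) := hS ▸ Submodule.mem_top
    have hadd : ∀ x y, (∃ n, x ∈ Fil ξ M0 n) → (∃ n, y ∈ Fil ξ M0 n) →
        (∃ n, x + y ∈ Fil ξ M0 n) := by
      rintro x y ⟨n, hn⟩ ⟨m, hm⟩
      exact ⟨max n m, add_mem (Fil_mono ξ M0 (le_max_left _ _) hn)
        (Fil_mono ξ M0 (le_max_right _ _) hm)⟩
    induction hx using Submodule.span_induction with
    | mem x hx =>
      refine ⟨1, (le_sup_right : _ ≤ Fil ξ M0 0 ⊔ M0.map (ξ ^ 0)) ⟨x, Submodule.subset_span hx, ?_⟩⟩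
      simp
    | zero => exact ⟨0, zero_mem _⟩
    | add x y _ _ hx hy => exact hadd x y hx hy
    | smul p x _ hx =>
      induction p using Polynomial.induction_on' with
      | add p q hp hq => rw [add_smul]; exact hadd _ _ hp hq
      | monomial n a =>
        obtain ⟨m, hm⟩ := hx
        refine ⟨m + n, ?_⟩
        rw [← Polynomial.C_mul_X_pow_eq_monomial, mul_smul, ← hξ]
        exact Submodule.smul_mem _ a (Fil_pow ξ M0 n hm)
  obtain ⟨n0, hn0⟩ := monotone_stabilizes_iff_noetherian.2
    (inferInstance : IsNoetherian R M0) ⟨Ker ξ M0, Ker_mono ξ M0⟩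
  choose g hg0 hg using fun n => h (M0 ⧸ Ker ξ M0 n)
  let f := ∏ i ∈ Finset.range (n0 + 1), g i
  have hf : ∀ n, GenFlat A (M0 ⧸ Ker ξ M0 n) f := by
    intro n
    rcases le_or_gt n n0 with hn | hn
    · exact (hg n).mul (Finset.dvd_prod_of_mem g (by simp; omega))
    · have : Ker ξ M0 n = Ker ξ M0 n0 := (hn0 n hn.le).symm
      rw [this]
      exact (hg n0).mul (Finset.dvd_prod_of_mem g (by simp))
  refine ⟨f, Finset.prod_ne_zero_iff.2 fun i _ => hg0 i, ?_⟩
  refine GenFlat.union (fun n => (Fil ξ M0 n).restrictScalars A)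
    (fun m n hmn => Fil_mono ξ M0 hmn) hunion ?_
  intro n
  change GenFlat A (Fil ξ M0 n) f
  induction n with
  | zero =>
    have : Subsingleton (Fil ξ M0 0) := by
      change Subsingleton (⊥ : Submodule R M); infer_instance
    unfold GenFlat
    infer_instance
  | succ n ih =>
    let e := (Submodule.quotEquivOfEq _ _ (grMap_ker ξ M0 n)).symm ≪≫ₗ
      (grMap ξ M0 n).quotKerEquivOfSurjective (grMap_surj ξ M0 n)
    have h2 := (hf n).equiv (e.restrictScalars A)
    refine GenFlat.ext_sub ((Fil ξ M0 n).submoduleOf (Fil ξ M0 (n + 1))) ?_ h2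
    exact ih.equiv ((Submodule.submoduleOfEquivOfLe (Fil_le ξ M0 n)).symm.restrictScalars A)

theorem GF.finiteType {A B : Type*} [CommRing A] [CommRing B] [IsDomain A] [IsNoetherianRing A]
    [Algebra A B] [hB : Algebra.FiniteType A B] : GF.{_, _, w} A B := by
  obtain ⟨n, φ, hφ⟩ := Algebra.FiniteType.iff_quotient_mvPolynomial''.1 hB
  refine GF.of_surjective φ hφ ?_
  clear hφ φ
  induction n with
  | zero =>
    exact (GF.base A).of_surjective (MvPolynomial.isEmptyAlgEquiv A (Fin 0)).symm.toAlgHom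
      (MvPolynomial.isEmptyAlgEquiv A (Fin 0)).symm.surjective
  | succ n ih =>
    exact ih.polynomial.of_surjective
      ((MvPolynomial.finSuccEquiv A n).symm.toAlgHom)
      (MvPolynomial.finSuccEquiv A n).symm.surjective

end RadIdx

namespace RadIdx
universe u v w

theorem mul_inj {A : Type u} {B : Type v} [CommRing A] [CommRing B] [IsDomain A]
    [IsNoetherianRing A] [Algebra A B] [Algebra.FiniteType A B] (s : B)
    (hs : s ∈ nonZeroDivisors B) :
    ∃ f : A, f ≠ 0 ∧ ∀ (κ : Type w) [Field κ] [Algebra A κ], algebraMap A κ f ≠ 0 →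
      Function.Injective ((LinearMap.mulLeft A s).rTensor κ) := by
  obtain ⟨f, hf0, hf⟩ := GF.finiteType (A := A) (B := B) (B ⧸ Ideal.span {s})
  refine ⟨f, hf0, fun κ _ _ hκ => ?_⟩
  haveI : Module.Flat A (Localization.Away f ⊗[A] (B ⧸ Ideal.span {s})) := hf
  let ψ : B →ₗ[A] B := LinearMap.mulLeft A s
  have hψ : Function.Injective ψ := by
    intro x y hxy
    exact (mul_cancel_left_mem_nonZeroDivisors hs).1 hxy
  let q : B →ₗ[A] (B ⧸ Ideal.span {s}) := (Ideal.Quotient.mkₐ A (Ideal.span {s})).toLinearMap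
  have hq : Function.Surjective q := Ideal.Quotient.mk_surjective
  have hex : Function.Exact ψ q := by
    intro x
    change Ideal.Quotient.mk _ x = 0 ↔ _
    rw [Ideal.Quotient.eq_zero_iff_mem, Ideal.mem_span_singleton]
    constructor
    · rintro ⟨c, rfl⟩; exact ⟨c, rfl⟩
    · rintro ⟨c, rfl⟩; exact ⟨c, rfl⟩
  have key := LinearMap.lTensor_injective_of_exact_of_flat (q.lTensor (Localization.Away f))
    (LinearMap.lTensor_surjective _ hq) (ψ.lTensor (Localization.Away f))
    (Module.Flat.lTensor_preserves_injective_linearMap ψ hψ) (lTensor_exact _ hex hq) κ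
  let φ : Localization.Away f →ₐ[A] κ :=
    { IsLocalization.Away.lift (S := Localization.Away f) (g := algebraMap A κ) f
        (isUnit_iff_ne_zero.2 hκ) with
      commutes' := fun a => IsLocalization.Away.lift_eq f _ a }
  let σ : B ⊗[A] κ →ₗ[A] κ ⊗[A] (Localization.Away f ⊗[A] B) :=
    (TensorProduct.mk A (Localization.Away f) B 1).lTensor κ ∘ₗ (TensorProduct.comm A B κ).toLinearMap
  let ρ : κ ⊗[A] (Localization.Away f ⊗[A] B) →ₗ[A] B ⊗[A] κ :=
    (TensorProduct.comm A κ B).toLinearMap ∘ₗ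
      ((Algebra.TensorProduct.lift (AlgHom.id A κ) φ (fun _ _ => Commute.all _ _)).toLinearMap.rTensor B) ∘ₗ
      (TensorProduct.assoc A κ (Localization.Away f) B).symm.toLinearMap
  have hρσ : ρ ∘ₗ σ = LinearMap.id := by
    ext b c
    simp [ρ, σ]
  have hnat : σ ∘ₗ ψ.rTensor κ = (ψ.lTensor (Localization.Away f)).lTensor κ ∘ₗ σ := by
    ext b c
    simp [σ]
  have hσ : Function.Injective σ := by
    intro x y hxy
    have := congrArg ρ hxy
    rwa [← LinearMap.comp_apply, ← LinearMap.comp_apply, hρσ] at this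
  have : Function.Injective (σ ∘ₗ ψ.rTensor κ) := by
    rw [hnat]; exact key.comp hσ
  rw [LinearMap.coe_comp] at this
  exact Function.Injective.of_comp this

theorem loc_inj {A : Type u} {B : Type v} [CommRing A] [CommRing B] [IsDomain A]
    [IsNoetherianRing A] [Algebra A B] [Algebra.FiniteType A B] (s : B)
    (hs : s ∈ nonZeroDivisors B) (B' : Type*) [CommRing B'] [Algebra A B'] [Algebra B B']
    [IsScalarTower A B B'] [IsLocalization.Away s B'] :
    ∃ f : A, f ≠ 0 ∧ ∀ (κ : Type w) [Field κ] [Algebra A κ], algebraMap A κ f ≠ 0 →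
      Function.Injective (Algebra.TensorProduct.map (IsScalarTower.toAlgHom A B B')
        (AlgHom.id A κ)) := by
  obtain ⟨f, hf0, hf⟩ := mul_inj (A := A) s hs
  refine ⟨f, hf0, fun κ _ _ hκ => ?_⟩
  have h1 := hf κ hκ
  letI : Algebra (B ⊗[A] κ) (B' ⊗[A] κ) :=
    (Algebra.TensorProduct.map (IsScalarTower.toAlgHom A B B') (AlgHom.id A κ)).toRingHom.toAlgebra
  haveI : IsScalarTower B (B ⊗[A] κ) (B' ⊗[A] κ) := IsScalarTower.of_algebraMap_eq fun b => by
    rw [RingHom.algebraMap_toAlgebra]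
    simp [Algebra.TensorProduct.algebraMap_apply, IsScalarTower.algebraMap_apply B B' (B' ⊗[A] κ)]
  haveI := IsLocalization.tensorProduct_tensorProduct A κ (.powers s) B' (by
    ext x; simp [RingHom.algebraMap_toAlgebra])
  have h2 := IsLocalization.injective (B' ⊗[A] κ)
    (M := Algebra.algebraMapSubmonoid (B ⊗[A] κ) (.powers s)) (by
    rw [Algebra.algebraMapSubmonoid, Submonoid.map_powers, Submonoid.powers_le]
    rw [mem_nonZeroDivisors_iff_right]
    intro x hx
    apply h1
    rw [map_zero, ← hx, mul_comm]
    have : (LinearMap.mulLeft A s).rTensor κ = LinearMap.mulLeft A (algebraMap B (B ⊗[A] κ) s) := by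
      ext b c
      simp [Algebra.TensorProduct.algebraMap_apply]
    rw [this]; rfl)
  exact h2

theorem nilp_free {P Q E : Type*} [CommRing P] [CommRing Q] [CommRing E] [Algebra P Q] [Algebra P E]
    [IsReduced Q] [Module.Free P E] [Module.Finite P E] (x : Q ⊗[P] E) (hx : IsNilpotent x) :
    x ^ (Module.finrank P E) = 0 := by
  cases subsingleton_or_nontrivial Q
  · haveI : Subsingleton (Q ⊗[P] E) := Module.subsingleton Q _
    exact Subsingleton.elim _ _
  haveI : Nontrivial P := (algebraMap P Q).domain_nontrivial
  haveI : IsReduced (Polynomial Q) :=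
    ⟨fun p hp => by ext i; simpa using (Polynomial.isNilpotent_iff.1 hp i).eq_zero⟩
  have h1 : IsNilpotent (Algebra.lmul Q (Q ⊗[P] E) x) := hx.map _
  have h2 : (Algebra.lmul Q (Q ⊗[P] E) x).charpoly =
      Polynomial.X ^ Module.finrank Q (Q ⊗[P] E) := by
    rw [← sub_eq_zero]
    apply IsNilpotent.eq_zero
    rw [Module.finrank_eq_card_chooseBasisIndex]
    apply Matrix.isNilpotent_charpoly_sub_pow_of_isNilpotent
    exact h1.map (LinearMap.toMatrixAlgEquiv (Module.Free.chooseBasis Q (Q ⊗[P] E)))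
  have h3 := LinearMap.aeval_self_charpoly (Algebra.lmul Q (Q ⊗[P] E) x)
  rw [h2, Module.finrank_baseChange, map_pow, Polynomial.aeval_X, ← map_pow] at h3
  have := congrArg (fun φ => φ 1) h3
  simpa using this

theorem nilp_free' {A P κ E : Type*} [CommRing A] [CommRing P] [CommRing κ] [CommRing E]
    [Algebra A P] [Algebra A κ] [Algebra P E] [Algebra A E] [IsScalarTower A P E]
    [IsReduced (P ⊗[A] κ)] [Module.Free P E] [Module.Finite P E] (x : E ⊗[A] κ)
    (hx : IsNilpotent x) : x ^ (Module.finrank P E) = 0 := by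
  let e : E ⊗[A] κ ≃ₐ[P] (P ⊗[A] κ) ⊗[P] E :=
    (Algebra.TensorProduct.cancelBaseChange A P P E κ).symm.trans
      (Algebra.TensorProduct.comm P _ _)
  apply e.injective
  rw [map_pow, map_zero]
  exact nilp_free _ (hx.map e)

theorem reduced_mv {A κ : Type*} (ι : Type*) [CommRing A] [Field κ] [Algebra A κ] :
    IsReduced (MvPolynomial ι A ⊗[A] κ) := by
  let e := (Algebra.TensorProduct.comm A (MvPolynomial ι A) κ).trans
    ((MvPolynomial.algebraTensorAlgEquiv A κ (σ := ι)).restrictScalars A)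
  exact isReduced_of_injective e e.injective

theorem reduced_loc {A κ : Type*} {P P' : Type u} [CommRing A] [CommRing κ] [CommRing P]
    [CommRing P'] [Algebra A κ]
    [Algebra A P] [Algebra A P'] [Algebra P P'] [IsScalarTower A P P'] (M : Submonoid P)
    [IsLocalization M P'] [IsReduced (P ⊗[A] κ)] : IsReduced (P' ⊗[A] κ) := by
  letI : Algebra (P ⊗[A] κ) (P' ⊗[A] κ) :=
    (Algebra.TensorProduct.map (IsScalarTower.toAlgHom A P P') (AlgHom.id A κ)).toRingHom.toAlgebra
  haveI : IsScalarTower P (P ⊗[A] κ) (P' ⊗[A] κ) := IsScalarTower.of_algebraMap_eq fun b => by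
    rw [RingHom.algebraMap_toAlgebra]
    simp [Algebra.TensorProduct.algebraMap_apply, IsScalarTower.algebraMap_apply P P' (P' ⊗[A] κ)]
  haveI := IsLocalization.tensorProduct_tensorProduct A κ M P' (by
    ext x; simp [RingHom.algebraMap_toAlgebra])
  exact isReduced_localizationPreserves (Algebra.algebraMapSubmonoid (P ⊗[A] κ) M) (P' ⊗[A] κ)
    inferInstance

end RadIdx

namespace RadIdx
universe u v w

theorem free_of_finite (A : Type*) [CommRing A] [IsDomain A] [IsNoetherianRing A]
    (M : Type*) [AddCommGroup M] [Module A M] [Module.Finite A M] :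
    ∃ r : A, r ≠ 0 ∧ Module.Free (Localization.Away r) (Localization.Away r ⊗[A] M) := by
  haveI : Module.FinitePresentation A M := Module.finitePresentation_of_finite A M
  obtain ⟨r, hr, h1, -⟩ := Module.FinitePresentation.exists_free_localizedModule_powers
    (nonZeroDivisors A) (LocalizedModule.mkLinearMap (nonZeroDivisors A) M)
    (FractionRing A)
  exact ⟨r, nonZeroDivisors.ne_zero hr,
    Module.Free.of_equiv (LocalizedModule.equivTensorProduct (.powers r) M)⟩

theorem loc_inj' {A : Type*} {P : Type*} {B : Type*} [CommRing A] [CommRing P] [CommRing B]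
    [IsDomain A] [IsNoetherianRing A] [Algebra A P] [Algebra P B] [Algebra A B]
    [IsScalarTower A P B] [Algebra.FiniteType A B] (g : P)
    (hs : algebraMap P B g ∈ nonZeroDivisors B) :
    ∃ f : A, f ≠ 0 ∧ ∀ (κ : Type w) [Field κ] [Algebra A κ], algebraMap A κ f ≠ 0 →
      ∃ φ : B ⊗[A] κ →+* (Localization.Away g ⊗[P] B) ⊗[A] κ, Function.Injective φ := by
  letI : Algebra B (Localization.Away g ⊗[P] B) := Algebra.TensorProduct.rightAlgebra
  haveI : IsScalarTower P B (Localization.Away g ⊗[P] B) := inferInstance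
  haveI : IsScalarTower A B (Localization.Away g ⊗[P] B) := IsScalarTower.of_algebraMap_eq fun a => by
    rw [IsScalarTower.algebraMap_apply A P B, ← IsScalarTower.algebraMap_apply P B,
      IsScalarTower.algebraMap_apply A P (Localization.Away g ⊗[P] B)]
  haveI : IsLocalization.Away (algebraMap P B g) (Localization.Away g ⊗[P] B) := by
    have := IsLocalization.tensorRight (R := P) (S := B) (Localization.Away g) (.powers g)
    rwa [Algebra.algebraMapSubmonoid, Submonoid.map_powers] at this
  obtain ⟨f, hf0, hf⟩ := loc_inj (A := A) (algebraMap P B g) hs (Localization.Away g ⊗[P] B)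
  exact ⟨f, hf0, fun κ _ _ hκ => ⟨_, hf κ hκ⟩⟩

theorem finite_loc {P B : Type*} [CommRing P] [CommRing B] [IsDomain P] [Algebra P B]
    [Algebra.IsAlgebraic P B] [hB : Algebra.FiniteType P B] :
    ∃ g : P, g ≠ 0 ∧ Module.Finite (Localization.Away g) (Localization.Away g ⊗[P] B) := by
  obtain ⟨S, hS⟩ := hB.out
  obtain ⟨g, hg0, hg⟩ := Algebra.IsAlgebraic.exists_integral_multiples P S
  refine ⟨g, hg0, ?_⟩
  let C := integralClosure (Localization.Away g) (Localization.Away g ⊗[P] B)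
  let C' : Subalgebra P B := (C.restrictScalars P).comap Algebra.TensorProduct.includeRight
  have hC' : C' = ⊤ := by
    rw [eq_top_iff, ← hS, Algebra.adjoin_le_iff]
    intro b hb
    change IsIntegral (Localization.Away g) ((1 : Localization.Away g) ⊗ₜ[P] b)
    have h1 : IsIntegral (Localization.Away g) ((1 : Localization.Away g) ⊗ₜ[P] (g • b)) :=
      ((hg b hb).map (Algebra.TensorProduct.includeRight :
        B →ₐ[P] Localization.Away g ⊗[P] B)).tower_top
    obtain ⟨u, hu⟩ := IsLocalization.Away.algebraMap_isUnit (S := Localization.Away g) g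
    have h2 := h1.smul (u⁻¹ : (Localization.Away g)ˣ).val
    convert h2 using 1
    rw [TensorProduct.tmul_smul, ← algebraMap_smul (Localization.Away g) g, ← hu, smul_smul]
    simp
  haveI : Algebra.IsIntegral (Localization.Away g) (Localization.Away g ⊗[P] B) := by
    refine ⟨fun x => ?_⟩
    induction x with
    | zero => exact isIntegral_zero
    | add x y hx hy => exact hx.add hy
    | tmul a b =>
      have hb : b ∈ C' := hC' ▸ Algebra.mem_top
      have hb' : IsIntegral (Localization.Away g) ((1 : Localization.Away g) ⊗ₜ[P] b) := hb
      have := hb'.smul a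
      rwa [TensorProduct.smul_tmul', smul_eq_mul, mul_one] at this
  exact Algebra.IsIntegral.finite

theorem ft_loc {A P B : Type*} [CommRing A] [CommRing P] [CommRing B] [Algebra A P]
    [Algebra P B] [Algebra.FiniteType A P] [Algebra.FiniteType P B] (g : P) :
    Algebra.FiniteType A (Localization.Away g ⊗[P] B) := by
  haveI : Algebra.FiniteType A (Localization.Away g) := inferInstance
  haveI : Algebra.FiniteType (Localization.Away g) (Localization.Away g ⊗[P] B) := inferInstance
  exact Algebra.FiniteType.trans ‹Algebra.FiniteType A (Localization.Away g)› this

theorem inj_loc {P B : Type*} [CommRing P] [CommRing B] [Algebra P B]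
    (h : Function.Injective (algebraMap P B)) (g : P) :
    Function.Injective (algebraMap (Localization.Away g) (Localization.Away g ⊗[P] B)) := by
  have h1 := Module.Flat.lTensor_preserves_injective_linearMap (M := Localization.Away g)
    (Algebra.linearMap P B) h
  have h2 := h1.comp (TensorProduct.rid P (Localization.Away g)).symm.injective
  convert h2 using 1
  ext x
  simp [Algebra.TensorProduct.algebraMap_apply]

theorem dom_loc {P B : Type*} [CommRing P] [CommRing B] [IsDomain B] [Algebra P B]
    (g : P) (h : algebraMap P B g ≠ 0) : IsDomain (Localization.Away g ⊗[P] B) := by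
  letI : Algebra B (Localization.Away g ⊗[P] B) := Algebra.TensorProduct.rightAlgebra
  haveI := IsLocalization.tensorRight (R := P) (S := B) (Localization.Away g) (.powers g)
  refine IsLocalization.isDomain_of_le_nonZeroDivisors (R := B) _
    (M := Algebra.algebraMapSubmonoid B (.powers g)) ?_
  rw [Algebra.algebraMapSubmonoid, Submonoid.map_powers, Submonoid.powers_le]
  exact mem_nonZeroDivisors_of_ne_zero h

theorem nil_of_inj {R S : Type*} [CommRing R] [CommRing S] (φ : R →+* S)
    (hφ : Function.Injective φ) (n : ℕ) (h : ∀ y : S, IsNilpotent y → y ^ n = 0)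
    (x : R) (hx : IsNilpotent x) : x ^ n = 0 := by
  apply hφ
  rw [map_pow, map_zero]
  exact h _ (hx.map φ)

theorem case_alg {A : Type*} {P : Type u} {B : Type*} [CommRing A] [CommRing P] [CommRing B]
    [IsDomain A] [IsNoetherianRing A] [IsDomain P] [IsDomain B] [Algebra A P] [Algebra P B]
    [Algebra A B] [IsScalarTower A P B] [Algebra.FiniteType A P]
    [Algebra.FiniteType P B] [Algebra.IsAlgebraic P B]
    (hPB : Function.Injective (algebraMap P B))
    (hred : ∀ (κ : Type w) [Field κ] [Algebra A κ], IsReduced (P ⊗[A] κ)) :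
    ∃ f : A, f ≠ 0 ∧ ∃ n : ℕ, ∀ (κ : Type w) [Field κ] [Algebra A κ], algebraMap A κ f ≠ 0 →
      ∀ x : B ⊗[A] κ, IsNilpotent x → x ^ n = 0 := by
  haveI : IsNoetherianRing P := Algebra.FiniteType.isNoetherianRing A P
  haveI : Algebra.FiniteType A B := Algebra.FiniteType.trans ‹Algebra.FiniteType A P› ‹_›
  obtain ⟨g, hg0, hfin⟩ := finite_loc (P := P) (B := B)
  have hgB : algebraMap P B g ≠ 0 := by rwa [Ne, map_eq_zero_iff _ hPB]
  haveI := dom_loc g hgB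
  have hinj := inj_loc hPB g
  haveI : IsDomain (Localization.Away g) := hinj.isDomain
  haveI : IsNoetherianRing (Localization.Away g) :=
    IsLocalization.isNoetherianRing (.powers g) _ inferInstance
  haveI := ft_loc (A := A) (B := B) g
  obtain ⟨r, hr0, hfree⟩ := free_of_finite (Localization.Away g) (Localization.Away g ⊗[P] B)
  have hrB : algebraMap (Localization.Away g) (Localization.Away g ⊗[P] B) r ≠ 0 := by
    rwa [Ne, map_eq_zero_iff _ hinj]
  obtain ⟨f1, hf1, h1⟩ := loc_inj' (A := A) (B := B) g (mem_nonZeroDivisors_of_ne_zero hgB)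
  obtain ⟨f2, hf2, h2⟩ := loc_inj' (A := A) (B := Localization.Away g ⊗[P] B) r
    (mem_nonZeroDivisors_of_ne_zero hrB)
  refine ⟨f1 * f2, mul_ne_zero hf1 hf2, Module.finrank (Localization.Away r)
    (Localization.Away r ⊗[Localization.Away g] (Localization.Away g ⊗[P] B)), ?_⟩
  intro κ _ _ hκ x hx
  rw [map_mul] at hκ
  obtain ⟨φ1, hφ1⟩ := h1 κ (left_ne_zero_of_mul hκ)
  obtain ⟨φ2, hφ2⟩ := h2 κ (right_ne_zero_of_mul hκ)
  haveI := hred κ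
  haveI : IsReduced (Localization.Away g ⊗[A] κ) := reduced_loc (P := P) (.powers g)
  haveI : IsReduced (Localization.Away r ⊗[A] κ) :=
    reduced_loc (P := Localization.Away g) (.powers r)
  exact nil_of_inj φ1 hφ1 _ (nil_of_inj φ2 hφ2 _
    (fun y hy => nilp_free' (P := Localization.Away r) y hy)) x hx

theorem case_domain {A : Type*} {B : Type*} [CommRing A] [CommRing B]
    [IsDomain A] [IsNoetherianRing A] [IsDomain B] [Algebra A B] [hft : Algebra.FiniteType A B]
    (hAB : Function.Injective (algebraMap A B)) :
    ∃ f : A, f ≠ 0 ∧ ∃ n : ℕ, ∀ (κ : Type w) [Field κ] [Algebra A κ], algebraMap A κ f ≠ 0 →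
      ∀ x : B ⊗[A] κ, IsNilpotent x → x ^ n = 0 := by
  obtain ⟨S, hS⟩ := hft.out
  haveI : FaithfulSMul A B := (faithfulSMul_iff_algebraMap_injective A B).2 hAB
  haveI : Algebra.IsAlgebraic (Algebra.adjoin A (S : Set B)) B := by
    refine ⟨fun b => ?_⟩
    have hb : b ∈ Algebra.adjoin A (S : Set B) := hS ▸ Algebra.mem_top
    exact isAlgebraic_algebraMap (⟨b, hb⟩ : Algebra.adjoin A (S : Set B))
  obtain ⟨t, htS, ht⟩ := exists_isTranscendenceBasis_subset (R := A) (S : Set B)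
  haveI : Finite t := (S.finite_toSet.subset htS).to_subtype
  letI : Algebra (MvPolynomial t A) B := (MvPolynomial.aeval ((↑) : t → B)).toRingHom.toAlgebra
  haveI : IsScalarTower A (MvPolynomial t A) B := IsScalarTower.of_algebraMap_eq fun a => by
    rw [RingHom.algebraMap_toAlgebra]
    simp [MvPolynomial.algebraMap_eq]
  have hinj : Function.Injective (algebraMap (MvPolynomial t A) B) := ht.1
  haveI : Algebra.FiniteType (MvPolynomial t A) B :=
    Algebra.FiniteType.of_restrictScalars_finiteType A _ _
  haveI := ht.isAlgebraic
  haveI : Algebra.IsAlgebraic (MvPolynomial t A) B := by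
    refine Algebra.IsAlgebraic.of_ringHom_of_comp_eq (ht.1.aevalEquiv : MvPolynomial t A ≃ₐ[A] _)
      (RingHom.id B) ht.1.aevalEquiv.surjective Function.injective_id ?_
    ext x <;> simp [RingHom.algebraMap_toAlgebra]
  exact case_alg (P := MvPolynomial t A) hinj fun κ _ _ => reduced_mv _

end RadIdx

namespace RadIdx
universe u v w

theorem transfer {A A' D κ : Type*} [CommRing A] [CommRing A'] [CommRing D] [CommRing κ]
    [Algebra A A'] [Algebra A D] [Algebra A κ] [Algebra A' D] [Algebra A' κ]
    [IsScalarTower A A' D] [IsScalarTower A A' κ]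
    (hs : Function.Surjective (algebraMap A A')) (n : ℕ)
    (h : ∀ x : D ⊗[A'] κ, IsNilpotent x → x ^ n = 0) (x : D ⊗[A] κ) (hx : IsNilpotent x) :
    x ^ n = 0 := by
  haveI : TensorProduct.CompatibleSMul A A' D κ := ⟨fun r m n => by
    obtain ⟨a, rfl⟩ := hs r
    rw [algebraMap_smul, algebraMap_smul, TensorProduct.smul_tmul]⟩
  let e := Algebra.TensorProduct.equivOfCompatibleSMul A A' A D κ
  apply e.symm.injective
  rw [map_pow, map_zero]
  exact h _ (hx.map e.symm)

/-- Uniform bound for the ideal `J`. -/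
def Bd (A : Type u) {B : Type v} [CommRing A] [CommRing B] [Algebra A B] (J : Ideal B) : Prop :=
  ∃ n : ℕ, ∀ (κ : Type w) [Field κ] [Algebra A κ] (x : B ⊗[A] κ),
    (∃ m : ℕ, x ^ m ∈ J.map (Algebra.TensorProduct.includeLeft : B →ₐ[A] B ⊗[A] κ)) →
    x ^ n ∈ J.map (Algebra.TensorProduct.includeLeft : B →ₐ[A] B ⊗[A] κ)

theorem bd_mul {A : Type u} {B : Type v} [CommRing A] [CommRing B] [Algebra A B] {J : Ideal B}
    {a b : B} (hab : a * b ∈ J) (ha : Bd.{u, v, w} A (J ⊔ Ideal.span {a}))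
    (hb : Bd.{u, v, w} A (J ⊔ Ideal.span {b})) : Bd.{u, v, w} A J := by
  obtain ⟨n1, h1⟩ := ha
  obtain ⟨n2, h2⟩ := hb
  refine ⟨n1 + n2, fun κ _ _ x ⟨m, hm⟩ => ?_⟩
  have e1 := h1 κ x ⟨m, Ideal.map_mono le_sup_left hm⟩
  have e2 := h2 κ x ⟨m, Ideal.map_mono le_sup_left hm⟩
  have e3 := Ideal.mul_mem_mul e1 e2
  rw [← pow_add, ← Ideal.map_mul] at e3
  refine Ideal.map_mono ?_ e3
  rw [Ideal.sup_mul, Ideal.mul_sup]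
  refine sup_le (sup_le Ideal.mul_le_left ?_) ?_
  · exact Ideal.mul_le_left
  · rw [Ideal.mul_sup, Ideal.span_singleton_mul_span_singleton]
    exact sup_le Ideal.mul_le_right ((Ideal.span_singleton_le_iff_mem _).2 hab)

theorem bd_prime {A : Type u} {B : Type v} [CommRing A] [CommRing B] [Algebra A B]
    [IsNoetherianRing A] [Algebra.FiniteType A B] (J : Ideal B) [hJ : J.IsPrime]
    (hi : ∀ b ∉ J, Bd.{u, v, w} A (J ⊔ Ideal.span {b})) : Bd.{u, v, w} A J := by
  let q : Ideal A := J.comap (algebraMap A B)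
  haveI : q.IsPrime := inferInstance
  haveI : Algebra.FiniteType (A ⧸ q) (B ⧸ J) :=
    Algebra.FiniteType.of_restrictScalars_finiteType A _ _
  obtain ⟨f', hf', n1, h1⟩ := case_domain.{w} (A := A ⧸ q) (B := B ⧸ J)
    Ideal.algebraMap_quotient_injective
  obtain ⟨f, rfl⟩ := Ideal.Quotient.mk_surjective f'
  have hf : algebraMap A B f ∉ J := fun h => hf' (Ideal.Quotient.eq_zero_iff_mem.2 h)
  obtain ⟨n2, h2⟩ := hi _ hf
  refine ⟨n1 + n2, fun κ _ _ x hx => ?_⟩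
  by_cases hq : ∃ a ∈ q, algebraMap A κ a ≠ 0
  · obtain ⟨a, ha, ha0⟩ := hq
    have : Ideal.map (Algebra.TensorProduct.includeLeft : B →ₐ[A] B ⊗[A] κ) J = ⊤ := by
      refine Ideal.eq_top_of_isUnit_mem _ (Ideal.mem_map_of_mem _ (show algebraMap A B a ∈ J from ha)) ?_
      rw [AlgHom.commutes, ← (Algebra.TensorProduct.includeRight : κ →ₐ[A] B ⊗[A] κ).commutes]
      exact (isUnit_iff_ne_zero.2 ha0).map _
    rw [this]; trivial
  push Not at hq
  by_cases hfκ : algebraMap A κ f = 0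
  · have : Ideal.map (Algebra.TensorProduct.includeLeft : B →ₐ[A] B ⊗[A] κ)
        (J ⊔ Ideal.span {algebraMap A B f}) =
        Ideal.map (Algebra.TensorProduct.includeLeft : B →ₐ[A] B ⊗[A] κ) J := by
      rw [Ideal.map_sup, Ideal.map_span, Set.image_singleton, AlgHom.commutes,
        ← (Algebra.TensorProduct.includeRight : κ →ₐ[A] B ⊗[A] κ).commutes, hfκ, map_zero]
      simp
    have h3 := h2 κ x
    rw [this] at h3
    rw [pow_add]
    exact Ideal.mul_mem_left _ _ (h3 hx)
  letI : Algebra (A ⧸ q) κ := (Ideal.Quotient.lift q (algebraMap A κ) hq).toAlgebra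
  haveI : IsScalarTower A (A ⧸ q) κ := IsScalarTower.of_algebraMap_eq fun a => rfl
  have hk := Algebra.TensorProduct.rTensor_ker (R := A) (C := κ) (Ideal.Quotient.mkₐ A J : B →ₐ[A] B ⧸ J)
    Ideal.Quotient.mk_surjective
  rw [show RingHom.ker (Ideal.Quotient.mkₐ A J) = J from Ideal.Quotient.mkₐ_ker A J] at hk
  rw [← hk] at hx ⊢
  obtain ⟨m, hm⟩ := hx
  rw [RingHom.mem_ker, map_pow] at hm ⊢
  rw [pow_add, transfer (A' := A ⧸ q) Ideal.Quotient.mk_surjective n1 (h1 κ hfκ) _ ⟨m, hm⟩,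
    zero_mul]

theorem bd_all {A : Type u} {B : Type v} [CommRing A] [CommRing B] [Algebra A B]
    [IsNoetherianRing A] [Algebra.FiniteType A B] (J : Ideal B) : Bd.{u, v, w} A J := by
  haveI : IsNoetherianRing B := Algebra.FiniteType.isNoetherianRing A B
  induction J using WellFoundedGT.induction with
  | ind J ih =>
    have key : ∀ b ∉ J, Bd.{u, v, w} A (J ⊔ Ideal.span {b}) := fun b hb => by
      refine ih _ (lt_of_le_of_ne le_sup_left fun h => hb ?_)
      rw [h]
      exact Ideal.mem_sup_right (Ideal.mem_span_singleton_self b)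
    by_cases hJ : J.IsPrime
    · exact bd_prime J key
    rw [Ideal.not_isPrime_iff] at hJ
    obtain rfl | ⟨a, ha, b, hb, hab⟩ := hJ
    · exact ⟨0, fun κ _ _ x _ => by rw [Ideal.map_top]; trivial⟩
    · exact bd_mul hab (key a ha) (key b hb)

end RadIdx

/-- Proposition 4.2 of the paper.  Let `k` be an algebraically closed field
and `A → B` a homomorphism of finitely generated commutative `k`-algebras, corresponding to a
morphism `Spec B → Spec A` of finite type affine `k`-schemes.  Then there is a positive integer
`n` such that for every prime ideal `p ⊆ A`, every nilpotent element of the fiber ring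
`B ⊗_A κ(p)` has `n`-th power zero, where `κ(p) = Frac(A ⧸ p)` is the residue field at `p`:
the radical index of every fiber is at most `n`. -/
theorem exists_uniform_radical_index_bound_of_fibers_affine
    (k : Type*) [Field k] [IsAlgClosed k]
    (A B : Type*) [CommRing A] [CommRing B] [Algebra k A] [Algebra k B]
    [Algebra A B] [IsScalarTower k A B]
    (hA : Algebra.FiniteType k A) (hB : Algebra.FiniteType k B) :
    ∃ n : ℕ, 0 < n ∧ ∀ (p : Ideal A), p.IsPrime →
      ∀ x : B ⊗[A] FractionRing (A ⧸ p), IsNilpotent x → x ^ n = 0 := by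
  haveI : IsNoetherianRing A := Algebra.FiniteType.isNoetherianRing k A
  haveI : Algebra.FiniteType A B := Algebra.FiniteType.of_restrictScalars_finiteType k A B
  obtain ⟨n, hn⟩ := RadIdx.bd_all (A := A) (⊥ : Ideal B)
  refine ⟨n + 1, n.succ_pos, fun p hp x hx => ?_⟩
  obtain ⟨m, hm⟩ := hx
  have h := hn (FractionRing (A ⧸ p)) x ⟨m, by rw [Ideal.map_bot]; exact hm⟩
  rw [Ideal.map_bot] at h
  rw [pow_succ, show x ^ n = 0 from h, zero_mul]
end

section
/- Let k be an algebraically closed field and let f : Y → X be a morphism of finite type k-schemes. Then there exists a positive integer n such that for every closed point x of X, the radical index of the scheme-theoretic fiber Y_x = Y ×_X Spec κ(x) is at most n; that is, for every open subset U of Y_x and every section g ∈ O_{Y_x}(U) whose germs are nilpotent, one has g^n = 0 in O_{Y_x}(U). -/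
open AlgebraicGeometry CategoryTheory CategoryTheory.Limits

namespace AlgebraicGeometry

/-- The radical index of a scheme `T` is at most `n` : for every open `U ⊆ T` and every
section `g ∈ O_T(U)` all of whose germs are nilpotent (i.e. `g` lies in the nilradical
sheaf), one has `g ^ n = 0`. -/
def Scheme.radicalIndexLE (T : Scheme) (n : ℕ) : Prop :=
  ∀ (U : T.Opens) (g : T.presheaf.obj (Opposite.op U)),
    (∀ (y : T) (hy : y ∈ U), IsNilpotent (T.presheaf.germ U y hy g)) → g ^ n = 0

end AlgebraicGeometry

section
open TensorProduct
set_option linter.style.haveILetI false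

universe u

namespace RadIdx

lemma gf_std {N : ℕ} {A B : Type u} [CommRing A] [IsDomain A] [CommRing B] [Algebra A B]
    (π : MvPolynomial (Fin N) A →ₐ[A] B) (hπ : Function.Surjective π) :
    ∃ a : A, a ≠ 0 ∧ ∃ J : Set (Fin N →₀ ℕ),
      Nonempty (Module.Basis J (Localization.Away a) (Localization.Away a ⊗[A] B)) := by
  classical
  let m : MonomialOrder (Fin N) := MonomialOrder.lex
  let E : Set (Fin N →₀ ℕ) := {c | ∃ f, π f = 0 ∧ f ≠ 0 ∧ m.degree f = c}
  let E₀ : Set (Fin N →₀ ℕ) := {c | Minimal (· ∈ E) c}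
  have hfin : E₀.Finite := WellQuasiOrderedLE.finite_of_isAntichain (setOfPred_minimal_antichain _)
  have hE₀ : ∀ c : E₀, ∃ f, π f = 0 ∧ f ≠ 0 ∧ m.degree f = c := fun c => c.2.1
  choose b hb0 hbne hbdeg using hE₀
  haveI : Fintype E₀ := hfin.fintype
  let a : A := ∏ c, m.leadingCoeff (b c)
  have ha : a ≠ 0 := Finset.prod_ne_zero_iff.mpr fun c _ => by
    simpa using hbne c
  refine ⟨a, ha, Eᶜ, ?_⟩
  let A' := Localization.Away a
  have hle : Submonoid.powers a ≤ nonZeroDivisors A := powers_le_nonZeroDivisors_of_noZeroDivisors ha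
  have hinj : Function.Injective (algebraMap A A') := IsLocalization.injective A' hle
  let v : (Eᶜ : Set (Fin N →₀ ℕ)) → B := fun c => π (MvPolynomial.monomial c.1 1)
  have hv : LinearIndependent A v := by
    rw [linearIndependent_iff]
    intro l hl
    by_contra hne
    let r : MvPolynomial (Fin N) A := Finsupp.linearCombination A
      (fun c : (Eᶜ : Set (Fin N →₀ ℕ)) => MvPolynomial.monomial c.1 (1:A)) l
    have hr0 : π r = 0 := by
      rw [← hl]
      simp only [r, Finsupp.linearCombination_apply, Finsupp.sum, map_sum, map_smul, v]
    have hcoef : ∀ c, r.coeff c = if h : c ∈ Eᶜ then l ⟨c, h⟩ else 0 := by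
      intro c
      simp only [r, Finsupp.linearCombination_apply, Finsupp.sum, MvPolynomial.coeff_sum,
        MvPolynomial.coeff_smul, MvPolynomial.coeff_monomial]
      split_ifs with h
      · rw [Finset.sum_eq_single ⟨c, h⟩]
        · simp
        · intro d _ hd
          rw [if_neg (fun h' => hd (Subtype.ext h'))]; simp
        · intro hd
          simpa using hd
      · apply Finset.sum_eq_zero
        intro d _
        rw [if_neg (fun h' : d.1 = c => h (h' ▸ d.2))]; simp
    have hrne : r ≠ 0 := by
      intro h
      apply hne
      ext c
      have := hcoef c.1
      rw [h, dif_pos c.2] at this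
      simpa using this.symm
    have hdeg : m.degree r ∈ E := ⟨r, hr0, hrne, rfl⟩
    have h1 := hcoef (m.degree r)
    rw [dif_neg (fun h => h hdeg)] at h1
    exact hrne (m.coeff_degree_eq_zero_iff.mp h1)
  have hv' : LinearIndependent A' (fun c => (1 : A') ⊗ₜ[A] v c) :=
    LinearIndependent.of_isLocalizedModule A' (Submonoid.powers a) (TensorProduct.mk A A' B 1) hv
  refine ⟨Module.Basis.mk hv' ?_⟩
  let ρ : MvPolynomial (Fin N) A' →ₐ[A'] A' ⊗[A] B :=
    MvPolynomial.aeval fun i => (1 : A') ⊗ₜ[A] π (MvPolynomial.X i)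
  have hρ : ∀ f, ρ (MvPolynomial.map (algebraMap A A') f) = 1 ⊗ₜ π f := by
    intro f
    induction f using MvPolynomial.induction_on with
    | C x =>
      simp only [MvPolynomial.map_C, ρ, MvPolynomial.aeval_C]
      rw [← MvPolynomial.algebraMap_eq, AlgHom.commutes, Algebra.TensorProduct.algebraMap_apply,
        Algebra.algebraMap_self_apply, Algebra.algebraMap_eq_smul_one (R := A) (A := A') x,
        Algebra.algebraMap_eq_smul_one (R := A) (A := B) x, TensorProduct.smul_tmul]
    | add p q hp hq => simp only [map_add, hp, hq, TensorProduct.tmul_add]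
    | mul_X p i hp =>
      simp only [map_mul, hp, MvPolynomial.map_X]
      simp [ρ]
  have hdegmap : ∀ f : MvPolynomial (Fin N) A,
      m.degree (MvPolynomial.map (algebraMap A A') f) = m.degree f := by
    intro f
    simp only [MonomialOrder.degree, MvPolynomial.support_map_of_injective _ hinj]
  have key : ∀ f : MvPolynomial (Fin N) A', ρ f ∈ Submodule.span A'
      (Set.range (fun c => (1 : A') ⊗ₜ[A] v c)) := by
    intro f
    obtain ⟨g, r, hfg, -, hr⟩ := m.div
      (b := fun c : E₀ => MvPolynomial.map (algebraMap A A') (b c)) (by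
        intro c
        rw [MonomialOrder.leadingCoeff, hdegmap, MvPolynomial.coeff_map]
        have h1 : IsUnit (algebraMap A A' a) := IsLocalization.Away.algebraMap_isUnit a
        simp only [a, map_prod] at h1
        exact (IsUnit.prod_univ_iff.mp h1) c) f
    rw [hfg, map_add]
    have h0 : ρ (Finsupp.linearCombination _
        (fun c : E₀ => MvPolynomial.map (algebraMap A A') (b c)) g) = 0 := by
      simp only [Finsupp.linearCombination_apply, Finsupp.sum, map_sum, smul_eq_mul, map_mul, hρ,
        hb0, TensorProduct.tmul_zero, mul_zero, Finset.sum_const_zero]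
    rw [h0, zero_add, r.as_sum, map_sum]
    refine Submodule.sum_mem _ fun c hc => ?_
    have hcE : c ∈ Eᶜ := by
      intro hcE
      obtain ⟨d, hdc, hd⟩ := exists_minimal_le_of_wellFoundedLT (· ∈ E) c hcE
      apply hr c hc ⟨d, hd⟩
      simp only [hdegmap, hbdeg]
      exact hdc
    have : MvPolynomial.monomial c (r.coeff c) = (r.coeff c) •
        MvPolynomial.map (algebraMap A A') (MvPolynomial.monomial c (1:A)) := by
      simp [MvPolynomial.map_monomial, MvPolynomial.smul_monomial]
    rw [this, map_smul, hρ]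
    exact Submodule.smul_mem _ _ (Submodule.subset_span ⟨⟨c, hcE⟩, rfl⟩)
  rintro x -
  induction x using TensorProduct.induction_on with
  | zero => exact Submodule.zero_mem _
  | add x y hx hy => exact Submodule.add_mem _ hx hy
  | tmul x y =>
    obtain ⟨f, rfl⟩ := hπ y
    have : x ⊗ₜ[A] π f = x • ((1 : A') ⊗ₜ[A] π f) := by
      rw [TensorProduct.smul_tmul', smul_eq_mul, mul_one]
    rw [this, ← hρ]
    exact Submodule.smul_mem _ _ (key _)

lemma gf (A B : Type u) [CommRing A] [IsDomain A] [CommRing B] [Algebra A B]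
    [Algebra.FiniteType A B] :
    ∃ a : A, a ≠ 0 ∧ ∃ J : Type, ∀ (A' : Type u) [CommRing A'] [Algebra A A'],
      IsUnit (algebraMap A A' a) → Nonempty (Module.Basis J A' (A' ⊗[A] B)) := by
  obtain ⟨N, π, hπ⟩ := Algebra.FiniteType.iff_quotient_mvPolynomial''.mp ‹Algebra.FiniteType A B›
  obtain ⟨a, ha, J, ⟨bas⟩⟩ := gf_std π hπ
  refine ⟨a, ha, J, fun A' _ _ hu => ?_⟩
  letI : Algebra (Localization.Away a) A' :=
    (IsLocalization.Away.lift (S := Localization.Away a) a hu).toAlgebra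
  haveI : IsScalarTower A (Localization.Away a) A' := IsScalarTower.of_algebraMap_eq fun x =>
    (IsLocalization.Away.lift_eq (S := Localization.Away a) a hu x).symm
  exact ⟨(bas.baseChange A').map
    (TensorProduct.AlgebraTensorModule.cancelBaseChange A (Localization.Away a) A' A' B)⟩

/-- regularity of an element after base change -/
lemma reg (A B : Type u) [CommRing A] [IsDomain A] [CommRing B] [IsDomain B] [Algebra A B]
    [Algebra.FiniteType A B] (h : B) (hh : h ≠ 0) :
    ∃ a : A, a ≠ 0 ∧ ∀ (K : Type u) [CommRing K] [Algebra A K], IsUnit (algebraMap A K a) →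
      ∀ x : K ⊗[A] B, ((1 : K) ⊗ₜ[A] h) * x = 0 → x = 0 := by
  obtain ⟨a, ha, J, H⟩ := gf A (B ⧸ Ideal.span {h})
  refine ⟨a, ha, fun K _ _ hu x hx => ?_⟩
  let A' := Localization.Away a
  letI : Algebra A' K :=
    (IsLocalization.Away.lift (S := Localization.Away a) a hu).toAlgebra
  haveI : IsScalarTower A A' K := IsScalarTower.of_algebraMap_eq fun x =>
    (IsLocalization.Away.lift_eq (S := Localization.Away a) a hu x).symm
  obtain ⟨bas⟩ := H A' (IsLocalization.Away.algebraMap_isUnit a)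
  haveI : Module.Free A' (A' ⊗[A] (B ⧸ Ideal.span {h})) := Module.Free.of_basis bas
  let f : B →ₗ[A] B := LinearMap.mulLeft A h
  let q : B →ₗ[A] (B ⧸ Ideal.span {h}) := (Ideal.Quotient.mkₐ A (Ideal.span {h})).toLinearMap
  have hq : Function.Surjective q := Ideal.Quotient.mk_surjective
  have hf : Function.Injective f := mul_right_injective₀ hh
  have hfq : Function.Exact f q := by
    intro y
    simp only [q, f, AlgHom.toLinearMap_apply, Ideal.Quotient.mkₐ_eq_mk, Ideal.Quotient.eq_zero_iff_mem,
      Ideal.mem_span_singleton', Set.mem_range, LinearMap.mulLeft_apply, mul_comm]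
  have hq' : Function.Surjective (q.baseChange A') := LinearMap.lTensor_surjective A' hq
  have hf' : Function.Injective (f.baseChange A') := Module.Flat.lTensor_preserves_injective_linearMap (M := A') f hf
  have hfq' : Function.Exact (f.baseChange A') (q.baseChange A') := lTensor_exact A' hfq hq
  obtain ⟨s, hs⟩ := Module.projective_lifting_property (q.baseChange A') LinearMap.id hq'
  have T : Function.Surjective (q.baseChange A') ∧
      ∃ l, l ∘ₗ (f.baseChange A') = LinearMap.id := by
    refine (hfq'.split_tfae'.out 0 1).mp ?_
    exact ⟨hf', s, hs⟩
  obtain ⟨-, r, hr⟩ := T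
  let e := TensorProduct.AlgebraTensorModule.cancelBaseChange A A' K K B
  have hcomm : ∀ y, e ((f.baseChange A').baseChange K y) = (1 ⊗ₜ[A] h) * e y := by
    intro y
    induction y using TensorProduct.induction_on with
    | zero => simp
    | add x y hx hy => simp only [map_add, hx, hy, mul_add]
    | tmul c y =>
      induction y using TensorProduct.induction_on with
      | zero => simp
      | add x y hx hy => simp only [TensorProduct.tmul_add, map_add, hx, hy, mul_add]
      | tmul c' y => simp [e, f]
  have h2 : (f.baseChange A').baseChange K (e.symm x) = 0 := by
    apply e.injective
    rw [hcomm, e.apply_symm_apply, hx, map_zero]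
  have h3 := congrArg (r.baseChange K) h2
  rw [← LinearMap.comp_apply, ← LinearMap.baseChange_comp, hr, map_zero, LinearMap.baseChange_id] at h3
  simpa using h3

end RadIdx


namespace RadIdx

lemma pow_card_eq_zero {D C J : Type*} [CommRing D] [IsDomain D] [CommRing C] [Algebra D C]
    [Finite J] (b : Module.Basis J D C) (g : C) (hg : IsNilpotent g) : g ^ Nat.card J = 0 := by
  haveI := Module.Free.of_basis b
  haveI := Module.Finite.of_basis b
  have h1 : IsNilpotent (Algebra.lmul D C g) := hg.map (Algebra.lmul D C)
  have h2 := (LinearMap.isNilpotent_iff_charpoly (Algebra.lmul D C g)).mp h1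
  have h3 := LinearMap.aeval_self_charpoly (Algebra.lmul D C g)
  rw [h2, map_pow, Polynomial.aeval_X, ← map_pow] at h3
  have h4 := congrArg (fun e : Module.End D C => e 1) h3
  rw [← Module.finrank_eq_nat_card_basis b]
  simpa using h4

lemma cmp {A P B K D R' J : Type*} [CommRing A] [CommRing P] [CommRing B] [CommRing K] [CommRing D]
    [CommRing R'] [IsDomain D] [Finite J] [Algebra A P] [Algebra A B] [Algebra P B]
    [IsScalarTower A P B]
    [Algebra A K] [Algebra K D] [Algebra P D] [Algebra A D] [IsScalarTower A K D]
    [IsScalarTower A P D] (b : Module.Basis J D (D ⊗[P] B)) (τ : K ⊗[A] B →+* R') (ψ₀ : D →+* R')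
    (hP : ∀ p, ψ₀ (algebraMap P D p) = τ (1 ⊗ₜ algebraMap P B p))
    (hK : ∀ x, ψ₀ (algebraMap K D x) = τ (x ⊗ₜ 1)) (g : K ⊗[A] B) (hg : IsNilpotent g) :
    τ (g ^ Nat.card J) = 0 := by
  letI algPR : Algebra P R' := (ψ₀.comp (algebraMap P D)).toAlgebra
  let φ₁ : K →ₐ[A] (D ⊗[P] B) :=
    (Algebra.TensorProduct.includeLeft : D →ₐ[A] D ⊗[P] B).comp (IsScalarTower.toAlgHom A K D)
  let φ₂ : B →ₐ[A] (D ⊗[P] B) :=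
    { (Algebra.TensorProduct.includeRight : B →ₐ[P] D ⊗[P] B) with
      commutes' := fun x => by
        change (Algebra.TensorProduct.includeRight : B →ₐ[P] D ⊗[P] B) (algebraMap A B x) = _
        rw [IsScalarTower.algebraMap_apply A P B, AlgHom.commutes,
          Algebra.TensorProduct.algebraMap_apply, Algebra.TensorProduct.algebraMap_apply,
          ← IsScalarTower.algebraMap_apply A P D] }
  let φ : K ⊗[A] B →ₐ[A] (D ⊗[P] B) := Algebra.TensorProduct.lift φ₁ φ₂ fun _ _ => .all _ _
  let ψ₁ : D →ₐ[P] R' := { ψ₀ with commutes' := fun p => rfl }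
  let ψ₂ : B →ₐ[P] R' :=
    { τ.comp (Algebra.TensorProduct.includeRight : B →ₐ[A] K ⊗[A] B).toRingHom with
      commutes' := fun p => (hP p).symm }
  let ψ : D ⊗[P] B →ₐ[P] R' := Algebra.TensorProduct.lift ψ₁ ψ₂ fun _ _ => .all _ _
  have hψφ : ∀ x, ψ (φ x) = τ x := by
    intro x
    induction x using TensorProduct.induction_on with
    | zero => simp
    | add x y hx hy => simp only [map_add, hx, hy]
    | tmul x y =>
      have e1 : φ (x ⊗ₜ y) = (algebraMap K D x) ⊗ₜ y := by
        simp only [φ, Algebra.TensorProduct.lift_tmul]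
        change ((algebraMap K D x) ⊗ₜ (1 : B)) * ((1 : D) ⊗ₜ y) = _
        rw [Algebra.TensorProduct.tmul_mul_tmul, mul_one, one_mul]
      rw [e1]
      simp only [ψ, Algebra.TensorProduct.lift_tmul]
      change ψ₀ (algebraMap K D x) * τ (1 ⊗ₜ y) = _
      rw [hK, ← map_mul, Algebra.TensorProduct.tmul_mul_tmul, mul_one, one_mul]
  rw [← hψφ, map_pow φ, pow_card_eq_zero b (φ g) (hg.map φ), map_zero]

lemma eps {σ A B K : Type*} [CommRing A] [CommRing B] [CommRing K] [Algebra A B] [Algebra A K]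
    [Algebra (MvPolynomial σ A) B] [IsScalarTower A (MvPolynomial σ A) B] (p : MvPolynomial σ A) :
    (MvPolynomial.aeval fun i => (1 : K) ⊗ₜ[A] algebraMap (MvPolynomial σ A) B (MvPolynomial.X i) :
      MvPolynomial σ K →ₐ[K] K ⊗[A] B) (MvPolynomial.map (algebraMap A K) p) =
      1 ⊗ₜ algebraMap (MvPolynomial σ A) B p := by
  induction p using MvPolynomial.induction_on with
  | C x =>
    simp only [MvPolynomial.map_C, MvPolynomial.aeval_C, Algebra.TensorProduct.algebraMap_apply]
    rw [← MvPolynomial.algebraMap_eq, ← IsScalarTower.algebraMap_apply A (MvPolynomial σ A) B,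
      Algebra.algebraMap_self_apply, Algebra.algebraMap_eq_smul_one (R := A) (A := K) x,
      Algebra.algebraMap_eq_smul_one (R := A) (A := B) x, TensorProduct.smul_tmul]
  | add p q hp hq => simp only [map_add, hp, hq, TensorProduct.tmul_add]
  | mul_X p i hp =>
    simp only [map_mul, hp, MvPolynomial.map_X, MvPolynomial.aeval_X,
      Algebra.TensorProduct.tmul_mul_tmul, mul_one]

lemma core_aux {σ A B : Type u} [CommRing A] [IsDomain A] [CommRing B] [IsDomain B] [Algebra A B]
    [Algebra.FiniteType A B] [Algebra (MvPolynomial σ A) B] [IsScalarTower A (MvPolynomial σ A) B]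
    (hinj : Function.Injective (algebraMap (MvPolynomial σ A) B))
    [Algebra.IsAlgebraic (MvPolynomial σ A) B] :
    ∃ a : A, a ≠ 0 ∧ ∃ m : ℕ, ∀ (K : Type u) [Field K] [Algebra A K],
      algebraMap A K a ≠ 0 → ∀ g : K ⊗[A] B, IsNilpotent g → g ^ m = 0 := by
  haveI : Algebra.FiniteType (MvPolynomial σ A) B :=
    Algebra.FiniteType.of_restrictScalars_finiteType A _ B
  obtain ⟨h, hh, J, H⟩ := gf (MvPolynomial σ A) B
  have hJ : Finite J := by
    let L := FractionRing (MvPolynomial σ A)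
    obtain ⟨b⟩ := H L (by
      rw [isUnit_iff_ne_zero]
      simpa using hh)
    haveI : Algebra.IsAlgebraic L (L ⊗[MvPolynomial σ A] B) := inferInstance
    haveI : Algebra.IsIntegral L (L ⊗[MvPolynomial σ A] B) := inferInstance
    haveI : Module.Finite L (L ⊗[MvPolynomial σ A] B) := Algebra.IsIntegral.finite
    exact Module.Finite.finite_basis b
  obtain ⟨a₁, ha₁, hreg⟩ := reg A B (algebraMap _ B h) (by
    rw [Ne, map_eq_zero_iff _ hinj]; exact hh)
  obtain ⟨c, hc⟩ := MvPolynomial.ne_zero_iff.mp hh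
  refine ⟨a₁ * h.coeff c, mul_ne_zero ha₁ hc, Nat.card J, fun K _ _ haK g hg => ?_⟩
  rw [map_mul] at haK
  let Q := MvPolynomial σ K
  let h' : Q := MvPolynomial.map (algebraMap A K) h
  have hh' : h' ≠ 0 := by
    rw [MvPolynomial.ne_zero_iff]
    refine ⟨c, ?_⟩
    rw [MvPolynomial.coeff_map]
    exact right_ne_zero_of_mul haK
  obtain ⟨D, iD, iQD, hD⟩ : ∃ (D : Type u) (_ : CommRing D) (_ : Algebra Q D),
    IsLocalization.Away h' D := ⟨Localization.Away h', inferInstance, inferInstance, inferInstance⟩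
  haveI : IsDomain D := IsLocalization.isDomain_of_le_nonZeroDivisors _
    (powers_le_nonZeroDivisors_of_noZeroDivisors hh')
  letI algPD : Algebra (MvPolynomial σ A) D :=
    ((algebraMap Q D).comp (MvPolynomial.map (algebraMap A K))).toAlgebra
  letI algKD : Algebra K D := ((algebraMap Q D).comp (algebraMap K Q)).toAlgebra
  letI algAD : Algebra A D := ((algebraMap K D).comp (algebraMap A K)).toAlgebra
  haveI : IsScalarTower A K D := IsScalarTower.of_algebraMap_eq fun x => rfl
  have halgPD : ∀ p, algebraMap (MvPolynomial σ A) D p =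
    algebraMap Q D (MvPolynomial.map (algebraMap A K) p) := fun _ => rfl
  haveI : IsScalarTower A (MvPolynomial σ A) D := IsScalarTower.of_algebraMap_eq fun x => by
    rw [halgPD, MvPolynomial.algebraMap_eq, MvPolynomial.map_C]
    rfl
  obtain ⟨b⟩ := H D (by
    rw [halgPD]
    exact IsLocalization.Away.algebraMap_isUnit h')
  let R := K ⊗[A] B
  let hR : R := 1 ⊗ₜ algebraMap _ B h
  obtain ⟨R', iR', iRR', hR'⟩ : ∃ (D : Type u) (_ : CommRing D) (_ : Algebra R D),
    IsLocalization.Away hR D := ⟨Localization.Away hR, inferInstance, inferInstance, inferInstance⟩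
  let ε : Q →ₐ[K] R := MvPolynomial.aeval fun i => 1 ⊗ₜ algebraMap (MvPolynomial σ A) B (MvPolynomial.X i)
  have hε : ∀ p, ε (MvPolynomial.map (algebraMap A K) p) = 1 ⊗ₜ algebraMap (MvPolynomial σ A) B p := eps
  have hu : IsUnit (((algebraMap R R').comp ε.toRingHom) h') := by
    change IsUnit (algebraMap R R' (ε h'))
    rw [hε]
    exact IsLocalization.Away.algebraMap_isUnit hR
  have h0 : algebraMap R R' (g ^ Nat.card J) = 0 := by
    refine cmp b (algebraMap R R') (IsLocalization.Away.lift (S := D) h' hu) ?_ ?_ g hg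
    · intro p
      rw [halgPD, IsLocalization.Away.lift_eq, ← hε]
      rfl
    · intro x
      change IsLocalization.Away.lift (S := D) h' hu (algebraMap Q D (algebraMap K Q x)) = _
      rw [IsLocalization.Away.lift_eq]
      change algebraMap R R' (ε (algebraMap K Q x)) = _
      rw [AlgHom.commutes, Algebra.TensorProduct.algebraMap_apply]
      rfl
  obtain ⟨⟨_, e, rfl⟩, he⟩ := (IsLocalization.map_eq_zero_iff (Submonoid.powers hR) R' _).mp h0
  have hstep : ∀ e : ℕ, ∀ y : R, hR ^ e * y = 0 → y = 0 := by
    intro e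
    induction e with
    | zero => intro y hy; simpa using hy
    | succ e ih =>
      intro y hy
      rw [pow_succ, mul_assoc] at hy
      exact hreg K (isUnit_iff_ne_zero.mpr (left_ne_zero_of_mul haK)) y (ih _ hy)
  exact hstep e _ he

lemma core (A B : Type u) [CommRing A] [IsDomain A] [CommRing B] [IsDomain B] [Algebra A B]
    [Algebra.FiniteType A B] (hinj : Function.Injective (algebraMap A B)) :
    ∃ a : A, a ≠ 0 ∧ ∃ m : ℕ, ∀ (K : Type u) [Field K] [Algebra A K],
      algebraMap A K a ≠ 0 → ∀ g : K ⊗[A] B, IsNilpotent g → g ^ m = 0 := by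
  haveI : FaithfulSMul A B := (faithfulSMul_iff_algebraMap_injective A B).mpr hinj
  obtain ⟨s, hs⟩ := exists_isTranscendenceBasis A B
  letI : Algebra (MvPolynomial s A) B :=
    (MvPolynomial.aeval (R := A) (Subtype.val : s → B)).toRingHom.toAlgebra
  haveI : IsScalarTower A (MvPolynomial s A) B := IsScalarTower.of_algebraMap_eq fun x => by
    change _ = MvPolynomial.aeval (R := A) (Subtype.val : s → B) (algebraMap _ _ x)
    rw [AlgHom.commutes]
  haveI := hs.isAlgebraic
  haveI : Algebra.IsAlgebraic (MvPolynomial s A) B :=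
    Algebra.IsAlgebraic.of_ringHom_of_comp_eq (S := Algebra.adjoin A (Set.range (Subtype.val : s → B)))
      (B := B) hs.1.aevalEquiv (RingHom.id B) hs.1.aevalEquiv.surjective Function.injective_id (by
        ext x
        · simp [RingHom.algebraMap_toAlgebra]
        · simp [RingHom.algebraMap_toAlgebra])
  exact core_aux (σ := s) hs.1

end RadIdx


namespace RadIdx

lemma cmp2 {A A' B B' K S : Type*} [CommRing A] [CommRing A'] [CommRing B] [CommRing B']
    [CommRing K] [CommRing S] [Algebra A A'] [Algebra A B] [Algebra A B'] [Algebra B B']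
    [Algebra A' B'] [Algebra A K] [Algebra A' K] [IsScalarTower A A' K] [IsScalarTower A A' B']
    [IsScalarTower A B B']
    (τ : K ⊗[A] B →+* S) (θ : B' →+* S) (h1 : ∀ b, θ (algebraMap B B' b) = τ (1 ⊗ₜ b))
    (h2 : ∀ x, θ (algebraMap A' B' x) = τ (algebraMap A' K x ⊗ₜ 1)) :
    ∃ (φ : K ⊗[A] B →+* K ⊗[A'] B') (ψ : K ⊗[A'] B' →+* S), (∀ x, ψ (φ x) = τ x) ∧
      ∀ b, φ (1 ⊗ₜ b) = 1 ⊗ₜ algebraMap B B' b := by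
  letI : Algebra A' S := (θ.comp (algebraMap A' B')).toAlgebra
  let φ₂ : B →ₐ[A] (K ⊗[A'] B') :=
    { (Algebra.TensorProduct.includeRight : B' →ₐ[A'] K ⊗[A'] B').toRingHom.comp
        (algebraMap B B') with
      commutes' := fun x => by
        change (Algebra.TensorProduct.includeRight : B' →ₐ[A'] K ⊗[A'] B')
          (algebraMap B B' (algebraMap A B x)) = _
        rw [← IsScalarTower.algebraMap_apply A B B', IsScalarTower.algebraMap_apply A A' B',
          AlgHom.commutes, Algebra.TensorProduct.algebraMap_apply,
          Algebra.TensorProduct.algebraMap_apply, ← IsScalarTower.algebraMap_apply A A' K] }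
  let φ : K ⊗[A] B →ₐ[A] (K ⊗[A'] B') :=
    Algebra.TensorProduct.lift Algebra.TensorProduct.includeLeft φ₂ fun _ _ => .all _ _
  let ψ₁ : K →ₐ[A'] S :=
    { τ.comp (Algebra.TensorProduct.includeLeft : K →ₐ[A] K ⊗[A] B).toRingHom with
      commutes' := fun p => (h2 p).symm }
  let ψ₂ : B' →ₐ[A'] S := { θ with commutes' := fun p => rfl }
  let ψ : K ⊗[A'] B' →ₐ[A'] S := Algebra.TensorProduct.lift ψ₁ ψ₂ fun _ _ => .all _ _
  have e1 : ∀ x y, φ (x ⊗ₜ y) = x ⊗ₜ algebraMap B B' y := by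
    intro x y
    simp only [φ, Algebra.TensorProduct.lift_tmul]
    change (x ⊗ₜ (1 : B')) * ((1 : K) ⊗ₜ algebraMap B B' y) = _
    rw [Algebra.TensorProduct.tmul_mul_tmul, mul_one, one_mul]
  refine ⟨φ.toRingHom, ψ.toRingHom, fun x => ?_, fun b => e1 1 b⟩
  change ψ (φ x) = τ x
  induction x using TensorProduct.induction_on with
  | zero => simp
  | add x y hx hy => simp only [map_add, hx, hy]
  | tmul x y =>
    rw [e1]
    simp only [ψ, Algebra.TensorProduct.lift_tmul]
    change τ (x ⊗ₜ 1) * θ (algebraMap B B' y) = _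
    rw [h1, ← map_mul, Algebra.TensorProduct.tmul_mul_tmul, mul_one, one_mul]

lemma alg_aux (A B : Type u) [CommRing A] [CommRing B] [Algebra A B]
    [Algebra.FiniteType A B] [IsNoetherianRing B] (I : Ideal B) :
    ∃ n : ℕ, ∀ (K : Type u) [Field K] [Algebra A K], ∀ g : K ⊗[A] B,
      (∃ e : ℕ, g ^ e ∈ I.map (Algebra.TensorProduct.includeRight : B →ₐ[A] K ⊗[A] B)) →
      g ^ n ∈ I.map (Algebra.TensorProduct.includeRight : B →ₐ[A] K ⊗[A] B) := by
  induction I using WellFoundedGT.induction with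
  | ind I ih =>
  by_cases hp : I.IsPrime
  · -- prime case
    haveI : Algebra.FiniteType (A ⧸ I.comap (algebraMap A B)) (B ⧸ I) :=
      Algebra.FiniteType.of_restrictScalars_finiteType A _ _
    haveI : (I.comap (algebraMap A B)).IsPrime := Ideal.IsPrime.comap _
    obtain ⟨abar, habar, m, hm⟩ := core (A ⧸ I.comap (algebraMap A B)) (B ⧸ I)
      (Ideal.algebraMap_quotient_injective)
    obtain ⟨a, rfl⟩ := Ideal.Quotient.mk_surjective abar
    have haI : algebraMap A B a ∉ I := fun h => habar (Ideal.Quotient.eq_zero_iff_mem.mpr h)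
    have hlt : I < I ⊔ Ideal.span {algebraMap A B a} := by
      refine lt_of_le_of_ne le_sup_left fun h => haI ?_
      rw [h]
      exact Ideal.mem_sup_right (Ideal.mem_span_singleton_self _)
    obtain ⟨n', hn'⟩ := ih _ hlt
    refine ⟨max m n', fun K _ _ g hg => ?_⟩
    have hinc : ∀ x : A, (Algebra.TensorProduct.includeRight : B →ₐ[A] K ⊗[A] B) (algebraMap A B x)
        = algebraMap A K x ⊗ₜ 1 := by
      intro x
      rw [AlgHom.commutes, Algebra.TensorProduct.algebraMap_apply]
    by_cases hz : ∃ z ∈ I.comap (algebraMap A B), algebraMap A K z ≠ 0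
    · obtain ⟨z, hzI, hz⟩ := hz
      have : I.map (Algebra.TensorProduct.includeRight : B →ₐ[A] K ⊗[A] B) = ⊤ := by
        refine Ideal.eq_top_of_isUnit_mem _ (Ideal.mem_map_of_mem _ hzI) ?_
        rw [hinc]
        exact (isUnit_iff_ne_zero.mpr hz).map
          (Algebra.TensorProduct.includeLeft : K →ₐ[A] K ⊗[A] B)
      rw [this]; trivial
    · push Not at hz
      by_cases haK : algebraMap A K a = 0
      · have hmap : (I ⊔ Ideal.span {algebraMap A B a}).map
            (Algebra.TensorProduct.includeRight : B →ₐ[A] K ⊗[A] B) =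
            I.map (Algebra.TensorProduct.includeRight : B →ₐ[A] K ⊗[A] B) := by
          rw [Ideal.map_sup, Ideal.map_span, Set.image_singleton, hinc, haK,
            TensorProduct.zero_tmul, Ideal.span_singleton_zero, sup_bot_eq]
        have := hn' K g
        rw [hmap] at this
        exact Ideal.pow_mem_of_pow_mem _ (this hg) (le_max_right _ _)
      · letI : Algebra (A ⧸ I.comap (algebraMap A B)) K :=
          (Ideal.Quotient.lift _ (algebraMap A K) hz).toAlgebra
        haveI : IsScalarTower A (A ⧸ I.comap (algebraMap A B)) K :=
          IsScalarTower.of_algebraMap_eq fun x => rfl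
        let IR := I.map (Algebra.TensorProduct.includeRight : B →ₐ[A] K ⊗[A] B)
        obtain ⟨φ, ψ, h1, h2⟩ := cmp2 (A' := A ⧸ I.comap (algebraMap A B)) (B' := B ⧸ I)
          (Ideal.Quotient.mk IR)
          (Ideal.Quotient.lift I ((Ideal.Quotient.mk IR).comp
            (Algebra.TensorProduct.includeRight : B →ₐ[A] K ⊗[A] B).toRingHom)
            (fun x hx => Ideal.Quotient.eq_zero_iff_mem.mpr (Ideal.mem_map_of_mem _ hx)))
          (fun b => rfl) (fun x => by
            obtain ⟨x, rfl⟩ := Ideal.Quotient.mk_surjective x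
            change Ideal.Quotient.mk IR
              ((Algebra.TensorProduct.includeRight : B →ₐ[A] K ⊗[A] B) (algebraMap A B x)) = _
            rw [hinc]
            rfl)
        have hφ : ∀ y ∈ IR, φ y = 0 := by
          have : IR ≤ RingHom.ker φ := by
            refine Ideal.map_le_iff_le_comap.mpr fun b hb => ?_
            change φ (1 ⊗ₜ b) = 0
            rw [h2]
            have : algebraMap B (B ⧸ I) b = 0 := Ideal.Quotient.eq_zero_iff_mem.mpr hb
            rw [this, TensorProduct.tmul_zero]
          exact fun y hy => this hy
        obtain ⟨e, he⟩ := hg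
        have h3 := hm K haK (φ g) ⟨e, by rw [← map_pow, hφ _ he]⟩
        have h4 : Ideal.Quotient.mk IR (g ^ m) = 0 := by
          rw [← h1, map_pow φ, h3, map_zero]
        exact Ideal.pow_mem_of_pow_mem _ (Ideal.Quotient.eq_zero_iff_mem.mp h4) (le_max_left _ _)
  · by_cases htop : I = ⊤
    · subst htop
      refine ⟨0, fun K _ _ g _ => ?_⟩
      rw [Ideal.map_top]; trivial
    · obtain ⟨x, y, hxy, hx, hy⟩ : ∃ x y, x * y ∈ I ∧ x ∉ I ∧ y ∉ I := by
        by_contra! hcon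
        exact hp ⟨htop, fun {x y} hxy => or_iff_not_imp_left.mpr fun hx => hcon x y hxy hx⟩
      have hlt : ∀ z, z ∉ I → I < I ⊔ Ideal.span {z} := fun z hz => by
        refine lt_of_le_of_ne le_sup_left fun h => hz ?_
        rw [h]
        exact Ideal.mem_sup_right (Ideal.mem_span_singleton_self _)
      obtain ⟨n₁, h₁⟩ := ih _ (hlt x hx)
      obtain ⟨n₂, h₂⟩ := ih _ (hlt y hy)
      refine ⟨n₁ + n₂, fun K _ _ g ⟨e, he⟩ => ?_⟩
      have g₁ := h₁ K g ⟨e, Ideal.map_mono le_sup_left he⟩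
      have g₂ := h₂ K g ⟨e, Ideal.map_mono le_sup_left he⟩
      have hmul := Ideal.mul_mem_mul g₁ g₂
      rw [← pow_add, ← Ideal.map_mul] at hmul
      refine Ideal.map_mono ?_ hmul
      rw [Ideal.sup_mul, Ideal.mul_sup]
      refine sup_le (sup_le Ideal.mul_le_left Ideal.mul_le_left) ?_
      rw [Ideal.mul_sup, Ideal.span_singleton_mul_span_singleton]
      refine sup_le Ideal.mul_le_right ?_
      rwa [Ideal.span_singleton_le_iff_mem]

lemma alg_main (A B : Type u) [CommRing A] [CommRing B] [Algebra A B]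
    [Algebra.FiniteType A B] [IsNoetherianRing B] :
    ∃ n : ℕ, ∀ (K : Type u) [Field K] [Algebra A K], ∀ g : K ⊗[A] B,
      IsNilpotent g → g ^ n = 0 := by
  obtain ⟨n, hn⟩ := alg_aux A B ⊥
  refine ⟨n, fun K _ _ g ⟨e, he⟩ => ?_⟩
  have := hn K g ⟨e, by rw [he]; exact zero_mem _⟩
  rw [Ideal.map_bot] at this
  exact this

end RadIdx


namespace RadIdx
open AlgebraicGeometry CategoryTheory CategoryTheory.Limits

lemma loc_nil {R S : Type*} [CommRing R] [CommRing S] [Algebra R S] (M : Submonoid R)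
    [IsLocalization M S] (n : ℕ) (H : ∀ g : R, IsNilpotent g → g ^ n = 0) (z : S)
    (hz : IsNilpotent z) : z ^ n = 0 := by
  obtain ⟨r, s, rfl⟩ := IsLocalization.exists_mk'_eq M z
  obtain ⟨e, he⟩ := hz
  rw [← IsLocalization.mk'_pow, IsLocalization.mk'_eq_zero_iff] at he
  obtain ⟨t, ht⟩ := he
  have h1 : IsNilpotent ((t : R) * r) := by
    refine ⟨e + 1, ?_⟩
    rw [mul_pow, pow_succ (t : R), pow_succ r]
    calc (t : R) ^ e * t * (r ^ e * r) = t ^ e * (t * r ^ e) * r := by ring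
      _ = 0 := by rw [ht]; ring
  rw [← IsLocalization.mk'_pow, IsLocalization.mk'_eq_zero_iff]
  refine ⟨t ^ n, ?_⟩
  rw [SubmonoidClass.coe_pow, ← mul_pow, H _ h1]

lemma stalk_nil {T : Scheme.{u}} (R : CommRingCat.{u}) (j : Spec R ⟶ T) [IsOpenImmersion j] (n : ℕ)
    (H : ∀ g : R, IsNilpotent g → g ^ n = 0) (s : Spec R) (z : T.presheaf.stalk (j s))
    (hz : IsNilpotent z) : z ^ n = 0 := by
  haveI : s.asIdeal.IsPrime := PrimeSpectrum.isPrime s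
  letI : Algebra ↑R ↑((Spec R).presheaf.stalk s) := StructureSheaf.stalkAlgebra (↑R) s
  haveI : IsLocalization.AtPrime (↑((Spec R).presheaf.stalk s)) s.asIdeal :=
    StructureSheaf.IsLocalization.to_stalk R s
  have hinj : Function.Injective (j.stalkMap s).hom :=
    (ConcreteCategory.bijective_of_isIso (j.stalkMap s)).1
  apply hinj
  rw [map_pow, map_zero]
  exact loc_nil s.asIdeal.primeCompl n H _ (hz.map (j.stalkMap s).hom)

lemma chart {X Y : Scheme.{u}} (f : Y ⟶ X) (x : X) (U : X.Opens) (hU : IsAffineOpen U)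
    (V : Y.Opens) (hV : IsAffineOpen V) (hVU : V ≤ f ⁻¹ᵁ U) (hx : x ∈ U) (n : ℕ)
    (H : ∀ (K : Type u) [Field K] (ψ : Γ(X, U) →+* K),
      letI := ψ.toAlgebra
      letI := (f.appLE U V hVU).hom.toAlgebra
      ∀ g : K ⊗[Γ(X, U)] Γ(Y, V), IsNilpotent g → g ^ n = 0)
    (t : ↑(pullback f (X.fromSpecResidueField x)))
    (ht : pullback.fst f (X.fromSpecResidueField x) t ∈ V)
    (z : (pullback f (X.fromSpecResidueField x)).presheaf.stalk t) (hz : IsNilpotent z) :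
    z ^ n = 0 := by
  let ψ : Γ(X, U) ⟶ X.residueField x := X.presheaf.germ U x hx ≫ X.residue x
  have e₂ : Spec.map ψ ≫ hU.fromSpec = 𝟙 _ ≫ X.fromSpecResidueField x := by
    rw [Category.id_comp, Scheme.fromSpecResidueField, ← hU.fromSpecStalk_eq_fromSpecStalk hx,
      IsAffineOpen.fromSpecStalk, Spec.map_comp, Category.assoc]
  have e₁ := hU.SpecMap_appLE_fromSpec f hV hVU
  let j := pullback.map (Spec.map (f.appLE U V hVU)) (Spec.map ψ) f (X.fromSpecResidueField x)
    hV.fromSpec (𝟙 _) hU.fromSpec e₁ e₂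
  haveI : IsOpenImmersion j := inferInstance
  letI := ψ.hom.toAlgebra
  letI := (f.appLE U V hVU).hom.toAlgebra
  let e : pullback (Spec.map (f.appLE U V hVU)) (Spec.map ψ) ≅ _ :=
    (pullbackSymmetry _ _) ≪≫ (pullbackSpecIso Γ(X, U) (X.residueField x) Γ(Y, V))
  have htr : t ∈ Set.range j := by
    rw [Scheme.Pullback.range_map]
    constructor
    · change _ ∈ Set.range hV.fromSpec
      rw [hV.range_fromSpec]
      exact ht
    · exact ⟨_, rfl⟩
  obtain ⟨s, rfl⟩ := htr
  have hs : j s = (e.inv ≫ j) (e.hom s) := by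
    rw [← Scheme.Hom.comp_apply, Iso.hom_inv_id_assoc]
  have key := stalk_nil _ (e.inv ≫ j) n (H (X.residueField x) ψ.hom) (e.hom s)
  rw [← hs] at key
  exact key z hz


lemma geom {X Y : Scheme.{u}} (f : Y ⟶ X) [LocallyOfFiniteType f] [IsLocallyNoetherian Y]
    [CompactSpace Y] : ∃ n : ℕ, 0 < n ∧ ∀ (x : X)
      (t : ↑(pullback f (X.fromSpecResidueField x)))
      (z : (pullback f (X.fromSpecResidueField x)).presheaf.stalk t), IsNilpotent z → z ^ n = 0 := by
  have H : ∀ y : Y, ∃ (V : Y.Opens) (n : ℕ), y ∈ V ∧ ∀ (x : X)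
      (t : ↑(pullback f (X.fromSpecResidueField x)))
      (_ : pullback.fst f (X.fromSpecResidueField x) t ∈ V)
      (z : (pullback f (X.fromSpecResidueField x)).presheaf.stalk t),
      IsNilpotent z → z ^ n = 0 := by
    intro y
    obtain ⟨U, hU, hyU, -⟩ := exists_isAffineOpen_mem_and_subset
      (TopologicalSpace.Opens.mem_top (f y))
    obtain ⟨V, hV, hyV, hVU⟩ := exists_isAffineOpen_mem_and_subset (x := y) (U := f ⁻¹ᵁ U) hyU
    have hVU : V ≤ f ⁻¹ᵁ U := hVU
    letI := (f.appLE U V hVU).hom.toAlgebra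
    haveI : Algebra.FiniteType Γ(X, U) Γ(Y, V) := f.finiteType_appLE hU hV hVU
    haveI : IsNoetherianRing Γ(Y, V) := IsLocallyNoetherian.component_noetherian ⟨V, hV⟩
    obtain ⟨n, hn⟩ := alg_main Γ(X, U) Γ(Y, V)
    refine ⟨V, n, hyV, fun x t ht z hz => ?_⟩
    refine chart f x U hU V hV hVU ?_ n ?_ t ht z hz
    · have h1 : f (pullback.fst f (X.fromSpecResidueField x) t) = x := by
        rw [← Scheme.Hom.comp_apply, pullback.condition, Scheme.Hom.comp_apply,
          Scheme.fromSpecResidueField_apply]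
      have h2 : f (pullback.fst f (X.fromSpecResidueField x) t) ∈ U := hVU ht
      rwa [h1] at h2
    · intro K _ ψ
      letI := ψ.toAlgebra
      exact hn K
  choose V n hV hn using H
  obtain ⟨F, hF⟩ := isCompact_univ.elim_finite_subcover (fun y => (V y : Set Y))
    (fun y => (V y).isOpen) (fun y _ => Set.mem_iUnion.2 ⟨y, hV y⟩)
  refine ⟨F.sup n + 1, Nat.succ_pos _, fun x t z hz => ?_⟩
  obtain ⟨y, hy, hyt⟩ := Set.mem_iUnion₂.1
    (hF (Set.mem_univ (pullback.fst f (X.fromSpecResidueField x) t)))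
  exact pow_eq_zero_of_le ((Finset.le_sup hy).trans (Nat.le_succ _)) (hn y x t hyt z hz)

end RadIdx


end

/-- Proposition 4.3 of the paper.  Let `k` be an algebraically closed field
and `f : Y → X` a morphism of finite type `k`-schemes.  Then there is a positive integer `n`
bounding the radical index of every fiber `Y ×_X Spec κ(x)` of `f` over closed points `x ∈ X`. -/
theorem exists_uniform_radical_index_bound_of_fibers
    (k : Type*) [Field k] [IsAlgClosed k]
    (X Y : Scheme) (sX : X ⟶ Spec (CommRingCat.of k)) (sY : Y ⟶ Spec (CommRingCat.of k))
    [LocallyOfFiniteType sX] [QuasiCompact sX]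
    [LocallyOfFiniteType sY] [QuasiCompact sY]
    (f : Y ⟶ X) (hf : f ≫ sX = sY) :
    ∃ n : ℕ, 0 < n ∧ ∀ x : X, IsClosed ({x} : Set X) →
      (pullback f (X.fromSpecResidueField x)).radicalIndexLE n := by
  have hX : LocallyOfFiniteType (f ≫ sX) := by rw [hf]; infer_instance
  have : LocallyOfFiniteType f := locallyOfFiniteType_of_comp f sX
  have : IsLocallyNoetherian Y := LocallyOfFiniteType.isLocallyNoetherian sY
  have : CompactSpace Y := QuasiCompact.compactSpace_of_compactSpace sY
  obtain ⟨n, hn, H⟩ := RadIdx.geom f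
  refine ⟨n, hn, fun x _ U g hg => ?_⟩
  refine TopCat.Presheaf.section_ext (pullback f (X.fromSpecResidueField x)).sheaf U _ _ ?_
  intro y hy
  have h := H x y _ (hg y hy)
  rw [← map_pow] at h
  exact h.trans (map_zero _).symm
end

section
/- Let k be an algebraically closed field, let G and M be finite type k-schemes, and let ρ : G ×_k M → M be a morphism (for instance the action morphism of an algebraic group G acting on a variety M). Let H be the fiber product of (ρ, pr₂) : G ×_k M → M ×_k M with the diagonal Δ : M → M ×_k M, and let π : H → M be the induced projection; when ρ is a group action, the fiber of π over a closed point x ∈ M(k) is the isotropy subgroup scheme G_x of the action at x. Then there exists a positive integer N₁ such that for every closed point x of M, the radical index of the fiber π⁻¹(x) = G_x is at most N₁. -/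
open AlgebraicGeometry CategoryTheory CategoryTheory.Limits

section AlgHelpers
open TensorProduct nonZeroDivisors
universe u

lemma core0 {R F C : Type*} [CommRing R] [IsDomain R] [AddCommGroup F] [Module R F]
    [Module.Free R F] [Module.Finite R F] [CommRing C] [Algebra R C]
    (ι : F →ₗ[R] C) (φ : C →ₗ[R] F) (a : R) (h1 : ∀ c, ι (φ c) = a • c)
    (h2 : ∀ x, φ (ι x) = a • x) (g : C) (hg : IsNilpotent g) :
    (a ^ 2) • g ^ (Module.finrank R F + 1) = 0 := by
  by_cases ha : a = 0
  · simp [ha]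
  let N : Module.End R F := φ ∘ₗ (LinearMap.mulLeft R g) ∘ₗ ι
  have key : ∀ (j : ℕ) (x : F), (N ^ (j + 1)) x = a ^ j • φ (g ^ (j + 1) * ι x) := by
    intro j
    induction j with
    | zero => intro x; simp [N]
    | succ j ih =>
      intro x
      rw [pow_succ' N, Module.End.mul_apply, ih x]
      simp only [N, LinearMap.comp_apply, LinearMap.mulLeft_apply, map_smul, h1]
      rw [smul_smul, ← pow_succ, ← mul_assoc, ← pow_succ']
  obtain ⟨m, hm⟩ := hg
  have hN : IsNilpotent N := ⟨m + 1, by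
    ext x
    rw [key, pow_succ g, hm]
    simp⟩
  have h0 : N ^ (Module.finrank R F + 1) = 0 := by
    have := LinearMap.aeval_self_charpoly N
    rw [hN.charpoly_eq_X_pow_finrank, map_pow, Polynomial.aeval_X] at this
    rw [pow_succ, this, zero_mul]
  have h3 : ∀ x, φ (g ^ (Module.finrank R F + 1) * ι x) = 0 := by
    intro x
    have := key (Module.finrank R F) x
    rw [h0, LinearMap.zero_apply] at this
    exact (smul_eq_zero.mp this.symm).resolve_left (pow_ne_zero _ ha)
  have := congrArg ι (h3 (φ 1))
  rw [h1, h1] at this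
  simpa [smul_smul, pow_two] using this

lemma core1 {P E : Type*} [CommRing P] [IsDomain P] [CommRing E] [IsDomain E] [Algebra P E]
    [Module.Finite P E] (hinj : Function.Injective (algebraMap P E)) :
    ∃ (r : ℕ) (f : E), f ≠ 0 ∧ ∀ (R : Type u) [CommRing R] [IsDomain R] [Algebra P R]
      (g : R ⊗[P] E), IsNilpotent g → (1 ⊗ₜ f) * g ^ r = 0 := by
  classical
  obtain ⟨m, v, hv⟩ := Module.Finite.exists_fin (R := P) (M := E)
  obtain ⟨s, hs, hs'⟩ := exists_maximal_linearIndepOn P v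
  have : ∀ i, ∃ a : P, a ≠ 0 ∧ a • v i ∈ Submodule.span P (v '' s) := by
    intro i
    by_cases hi : i ∈ s
    · exact ⟨1, one_ne_zero, by
        rw [one_smul]; exact Submodule.subset_span ⟨i, hi, rfl⟩⟩
    · exact hs' i hi
  choose a ha ha' using this
  set f := ∏ i, a i with hf
  have hf0 : f ≠ 0 := Finset.prod_ne_zero_iff.mpr fun i _ => ha i
  set F := Submodule.span P (v '' s) with hF
  have hmem : ∀ e : E, f • e ∈ F := by
    intro e
    have he : e ∈ Submodule.span P (Set.range v) := hv ▸ Submodule.mem_top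
    induction he using Submodule.span_induction with
    | mem x hx =>
      obtain ⟨i, rfl⟩ := hx
      rw [hf, ← Finset.prod_erase_mul _ _ (Finset.mem_univ i), mul_smul]
      exact F.smul_mem _ (ha' i)
    | zero => simp
    | add x y _ _ hx hy => rw [smul_add]; exact F.add_mem hx hy
    | smul c x _ hx => rw [smul_comm]; exact F.smul_mem _ hx
  let b : Module.Basis s P F := (Module.Basis.span hs).map
    (LinearEquiv.ofEq _ _ (by rw [hF, Set.image_eq_range]))
  have : Module.Free P F := .of_basis b
  have : Module.Finite P F := .of_basis b
  let ψ : E →ₗ[P] F := LinearMap.codRestrict F (f • LinearMap.id) hmem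
  refine ⟨Module.finrank P F + 1, algebraMap P E (f ^ 2), ?_, ?_⟩
  · rw [Ne, map_eq_zero_iff _ hinj]; exact pow_ne_zero _ hf0
  intro R _ _ _ g hg
  have := core0 (F.subtype.baseChange R) (ψ.baseChange R) (algebraMap P R f) ?_ ?_ g hg
  · rw [Module.finrank_baseChange] at this
    rw [Algebra.smul_def] at this
    rw [← map_pow, Algebra.TensorProduct.algebraMap_apply, Algebra.algebraMap_self,
      RingHom.id_apply, Algebra.TensorProduct.tmul_one_eq_one_tmul] at this
    exact this
  · intro c
    induction c with
    | zero => simp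
    | add x y hx hy => simp only [map_add, hx, hy, smul_add]
    | tmul x y => simp [ψ]
  · intro c
    induction c with
    | zero => simp
    | add x y hx hy => simp only [map_add, hx, hy, smul_add]
    | tmul x y => 
      have : ψ y = f • y := by ext; simp [ψ]
      simp [this]
lemma norm1 {A D : Type*} [CommRing A] [IsDomain A] [CommRing D] [IsDomain D] [Algebra A D]
    [Algebra.FiniteType A D] (hinj : Function.Injective (algebraMap A D)) :
    ∃ (n : ℕ) (u : Fin n → D), Function.Injective (MvPolynomial.aeval (R := A) u) ∧
      ∀ d : D, ∃ a : A, a ≠ 0 ∧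
        (MvPolynomial.aeval (R := A) u).toRingHom.IsIntegralElem (algebraMap A D a * d) := by
  classical
  let K := Localization A⁰
  let N := Algebra.algebraMapSubmonoid D A⁰
  let DK := Localization N
  have hN : N ≤ D⁰ := by
    rintro _ ⟨a, ha, rfl⟩
    exact mem_nonZeroDivisors_of_ne_zero
      ((map_ne_zero_iff _ hinj).mpr (nonZeroDivisors.ne_zero ha))
  have hDK : Function.Injective (algebraMap D DK) := IsLocalization.injective _ hN
  let : Field K := inferInstanceAs (Field (FractionRing A))
  have hAK : Function.Injective (algebraMap A K) := IsLocalization.injective _ le_rfl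
  have : Nontrivial DK := hDK.nontrivial
  let : Algebra K DK := localizationAlgebra A⁰ D
  have : IsScalarTower A K DK := inferInstance
  have : Algebra.IsPushout A K D DK := (Algebra.isPushout_of_isLocalization A⁰ K D DK).symm
  have : Algebra.FiniteType K DK :=
    Algebra.FiniteType.equiv inferInstance (Algebra.IsPushout.equiv A K D DK)
  obtain ⟨n, g, hg, hgi⟩ := exists_integral_inj_algHom_of_fg K DK
  have hsurj : ∀ i, ∃ (a : A) (d : D), a ≠ 0 ∧
      algebraMap D DK d = algebraMap K DK (algebraMap A K a) * g (MvPolynomial.X i) := by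
    intro i
    obtain ⟨⟨d, _, a, ha, rfl⟩, h⟩ := IsLocalization.surj N (g (MvPolynomial.X i))
    refine ⟨a, d, nonZeroDivisors.ne_zero ha, ?_⟩
    rw [← h, mul_comm, ← IsScalarTower.algebraMap_apply, ← IsScalarTower.algebraMap_apply]
  choose a u ha hu using hsurj
  have ha' : ∀ i, algebraMap A K (a i) ≠ 0 := fun i => (map_ne_zero_iff _ hAK).mpr (ha i)
  let σ : MvPolynomial (Fin n) K →ₐ[K] MvPolynomial (Fin n) K :=
    MvPolynomial.aeval fun i => MvPolynomial.C (algebraMap A K (a i)) * MvPolynomial.X i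
  let τ : MvPolynomial (Fin n) K →ₐ[K] MvPolynomial (Fin n) K :=
    MvPolynomial.aeval fun i => MvPolynomial.C (algebraMap A K (a i))⁻¹ * MvPolynomial.X i
  have hστ : σ.comp τ = AlgHom.id _ _ := by
    ext1 i
    simp only [σ, τ, AlgHom.comp_apply, MvPolynomial.aeval_X, map_mul, MvPolynomial.aeval_C]
    rw [MvPolynomial.algebraMap_eq, ← mul_assoc, ← map_mul, inv_mul_cancel₀ (ha' i)]
    simp
  have hτσ : τ.comp σ = AlgHom.id _ _ := by
    ext1 i
    simp only [σ, τ, AlgHom.comp_apply, MvPolynomial.aeval_X, map_mul, MvPolynomial.aeval_C]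
    rw [MvPolynomial.algebraMap_eq, ← mul_assoc, ← map_mul, mul_inv_cancel₀ (ha' i)]
    simp
  let g' := g.comp σ
  have hg' : Function.Injective g' :=
    hg.comp (Function.LeftInverse.injective (g := τ) fun x => DFunLike.congr_fun hτσ x)
  have hgi' : g'.toRingHom.IsIntegral := by
    have : Function.Surjective σ :=
      Function.RightInverse.surjective (g := τ) fun x => DFunLike.congr_fun hστ x
    exact (RingHom.isIntegral_of_surjective σ.toRingHom this).trans _ _ hgi
  have hcomp : (algebraMap D DK).comp (MvPolynomial.aeval (R := A) u).toRingHom =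
      g'.toRingHom.comp (MvPolynomial.map (algebraMap A K)) := by
    apply MvPolynomial.ringHom_ext
    · intro r
      simp [← IsScalarTower.algebraMap_apply]
    · intro i
      simp [g', σ, hu, MvPolynomial.algHom_C]
  refine ⟨n, u, ?_, ?_⟩
  · have : Function.Injective
        ((algebraMap D DK).comp (MvPolynomial.aeval (R := A) u).toRingHom) := by
      rw [hcomp]
      exact hg'.comp (MvPolynomial.map_injective _ hAK)
    exact fun x y hxy => this (congrArg (algebraMap D DK) hxy)
  · intro d
    let := MvPolynomial.algebraMvPolynomial (σ := Fin n) (R := A) (S := K)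
    let : Algebra (MvPolynomial (Fin n) K) DK := g'.toRingHom.toAlgebra
    let : Algebra (MvPolynomial (Fin n) A) D :=
      (MvPolynomial.aeval (R := A) u).toRingHom.toAlgebra
    have : IsScalarTower (MvPolynomial (Fin n) A) D DK := inferInstance
    have : IsScalarTower (MvPolynomial (Fin n) A) (MvPolynomial (Fin n) K) DK :=
      .of_algebraMap_eq fun x => by
        rw [IsScalarTower.algebraMap_apply (MvPolynomial (Fin n) A) D DK]
        exact DFunLike.congr_fun hcomp x
    have h1 : IsIntegral (MvPolynomial (Fin n) K) (algebraMap D DK d) := hgi' _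
    obtain ⟨⟨_, b, hb, rfl⟩, hm⟩ := IsIntegral.exists_multiple_integral_of_isLocalization
      (A⁰.map (MvPolynomial.C (σ := Fin n))) _ h1
    refine ⟨b, nonZeroDivisors.ne_zero hb, ?_⟩
    rw [Submonoid.smul_def, Algebra.smul_def,
      IsScalarTower.algebraMap_apply (MvPolynomial (Fin n) A) D DK, ← map_mul] at hm
    have := (isIntegral_algebraMap_iff hDK).mp hm
    have e : algebraMap A D b = algebraMap (MvPolynomial (Fin n) A) D (MvPolynomial.C b) := by
      change _ = MvPolynomial.aeval u (MvPolynomial.C b)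
      simp
    rw [e]
    exact this

lemma exists_tensor_hom {A B B' C : Type*} [CommRing A] [CommRing B] [CommRing B'] [CommRing C]
    [Algebra A B] [Algebra A B'] (i : B →+* C) (j : B' →+* C)
    (h : ∀ a, i (algebraMap A B a) = j (algebraMap A B' a)) :
    ∃ φ : B ⊗[A] B' →+* C, (∀ b, φ (b ⊗ₜ 1) = i b) ∧ (∀ b, φ (1 ⊗ₜ b) = j b) := by
  let : Algebra A C := (i.comp (algebraMap A B)).toAlgebra
  let i' : B →ₐ[A] C := { i with commutes' := fun _ => rfl }
  let j' : B' →ₐ[A] C := { j with commutes' := fun a => (h a).symm }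
  refine ⟨(Algebra.TensorProduct.lift i' j' fun _ _ => Commute.all _ _).toRingHom, ?_, ?_⟩
  · intro b
    simp
    rfl
  · intro b
    simp
    rfl

lemma dom1 {A₀ D : Type*} [CommRing A₀] [CommRing D] [IsDomain D] [Algebra A₀ D]
    [Algebra.FiniteType A₀ D] :
    ∃ (r : ℕ) (h : D), h ≠ 0 ∧ ∀ (κ : Type u) [Field κ] [Algebra A₀ κ]
      (g : κ ⊗[A₀] D), IsNilpotent g → (1 ⊗ₜ h) * g ^ r = 0 := by
  classical
  let p := RingHom.ker (algebraMap A₀ D)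
  let A := A₀ ⧸ p
  let : Algebra A D := (RingHom.kerLift (algebraMap A₀ D)).toAlgebra
  have hp : p.IsPrime := RingHom.ker_isPrime _
  have : IsDomain A := inferInstanceAs (IsDomain (A₀ ⧸ p))
  have hAD : ∀ a : A₀, algebraMap A D (Ideal.Quotient.mk p a) = algebraMap A₀ D a := fun a => rfl
  have hinj : Function.Injective (algebraMap A D) := RingHom.kerLift_injective _
  have : IsScalarTower A₀ A D := .of_algebraMap_eq fun _ => rfl
  have : Algebra.FiniteType A D := .of_restrictScalars_finiteType A₀ A D
  obtain ⟨n, u, hu, hint⟩ := norm1 hinj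
  obtain ⟨S, hS⟩ := Algebra.FiniteType.out (R := A₀) (A := D)
  choose a ha hai using hint
  set s := ∏ d ∈ S, a d with hs
  have hs0 : s ≠ 0 := Finset.prod_ne_zero_iff.mpr fun i _ => ha i
  set sD := algebraMap A D s with hsD
  have hsD0 : sD ≠ 0 := (map_ne_zero_iff _ hinj).mpr hs0
  let P := MvPolynomial (Fin n) A
  let : Algebra P D := (MvPolynomial.aeval (R := A) u).toRingHom.toAlgebra
  have hPD : ∀ x : P, algebraMap P D x = MvPolynomial.aeval (R := A) u x := fun _ => rfl
  have hPC : ∀ x : A, algebraMap P D (MvPolynomial.C x) = algebraMap A D x := by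
    intro x; rw [hPD]; simp
  have hint' : ∀ d ∈ S, IsIntegral P (sD * d) := by
    intro d hd
    have h1 : IsIntegral P (algebraMap A D (a d) * d) := hai d
    rw [hsD, hs, ← Finset.prod_erase_mul _ _ hd, map_mul, mul_assoc]
    refine IsIntegral.mul ?_ h1
    rw [← hPC]
    exact isIntegral_algebraMap
  let E : Subalgebra P D := Algebra.adjoin P (S.image (fun d => sD * d) : Finset D)
  have hEfin : Module.Finite P E := by
    refine Algebra.finite_adjoin_of_finite_of_isIntegral (Finset.finite_toSet _) ?_
    intro x hx
    simp only [Finset.coe_image, Set.mem_image, Finset.mem_coe] at hx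
    obtain ⟨d, hd, rfl⟩ := hx
    exact hint' d hd
  have hsDE : sD ∈ E := by rw [hsD, ← hPC]; exact E.algebraMap_mem _
  have hpow : ∀ d : D, ∃ N, sD ^ N * d ∈ E := by
    intro d
    have hd : d ∈ Algebra.adjoin A₀ (S : Set D) := hS ▸ Algebra.mem_top
    induction hd using Algebra.adjoin_induction with
    | mem x hx =>
      refine ⟨1, ?_⟩
      rw [pow_one]
      exact Algebra.subset_adjoin (Finset.mem_coe.mpr (Finset.mem_image.mpr ⟨x, hx, rfl⟩))
    | algebraMap r =>
      refine ⟨0, ?_⟩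
      rw [pow_zero, one_mul, ← hAD, ← hPC]
      exact E.algebraMap_mem _
    | add x y _ _ hx hy =>
      obtain ⟨N, hN⟩ := hx
      obtain ⟨N', hN'⟩ := hy
      refine ⟨N + N', ?_⟩
      have : sD ^ (N + N') * (x + y) = sD ^ N' * (sD ^ N * x) + sD ^ N * (sD ^ N' * y) := by ring
      rw [this]
      exact E.add_mem (E.mul_mem (E.pow_mem hsDE _) hN) (E.mul_mem (E.pow_mem hsDE _) hN')
    | mul x y _ _ hx hy =>
      obtain ⟨N, hN⟩ := hx
      obtain ⟨N', hN'⟩ := hy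
      refine ⟨N + N', ?_⟩
      have : sD ^ (N + N') * (x * y) = (sD ^ N * x) * (sD ^ N' * y) := by ring
      rw [this]
      exact E.mul_mem hN hN'
  have hPE : Function.Injective (algebraMap P E) := by
    intro x y hxy
    exact hu (congrArg (algebraMap E D) hxy)
  obtain ⟨r, f, hf, hcore⟩ := core1 (P := P) (E := E) hPE
  refine ⟨r, sD * f, mul_ne_zero hsD0 (by simpa using hf), ?_⟩
  intro κ _ _ g hg
  by_cases hκ : ∀ x ∈ p, algebraMap A₀ κ x = 0
  swap
  · push Not at hκ
    obtain ⟨x, hx, hx0⟩ := hκ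
    have h1 : (algebraMap A₀ κ x) ⊗ₜ[A₀] (1 : D) = 0 := by
      rw [Algebra.TensorProduct.tmul_one_eq_one_tmul, (show algebraMap A₀ D x = 0 from hx)]
      simp
    have h2 : (1 : κ ⊗[A₀] D) = 0 := by
      have := congrArg (fun z => ((algebraMap A₀ κ x)⁻¹ ⊗ₜ[A₀] (1 : D)) * z) h1
      simpa [hx0, Algebra.TensorProduct.one_def] using this
    rw [← one_mul (_ * _), h2, zero_mul]
  let θ : A →+* κ := Ideal.Quotient.lift p (algebraMap A₀ κ) hκ
  have hθ : ∀ x, θ (Ideal.Quotient.mk p x) = algebraMap A₀ κ x := fun x => rfl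
  have hθt : ∀ x : A, (θ x) ⊗ₜ[A₀] (1 : D) = 1 ⊗ₜ algebraMap A D x := by
    intro x
    obtain ⟨x, rfl⟩ := Ideal.Quotient.mk_surjective x
    rw [hθ, hAD, Algebra.TensorProduct.tmul_one_eq_one_tmul]
  have hsplit : (1 : κ) ⊗ₜ[A₀] (sD * f) = (θ s ⊗ₜ 1) * (1 ⊗ₜ (f : D)) := by
    rw [hθt, Algebra.TensorProduct.tmul_mul_tmul, one_mul]
  rw [hsplit]
  by_cases hθs : θ s = 0
  · rw [hθs]; simp
  suffices h : (1 ⊗ₜ (f : D)) * g ^ r = 0 by rw [mul_assoc, h, mul_zero]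
  let R := MvPolynomial (Fin n) κ
  let : Algebra P R := (MvPolynomial.map θ).toAlgebra
  have hPR : ∀ x, algebraMap P R x = MvPolynomial.map θ x := fun _ => rfl
  have : IsDomain R := inferInstanceAs (IsDomain (MvPolynomial (Fin n) κ))
  let sE : E := ⟨sD, hsDE⟩
  have hsE : sE = algebraMap P E (MvPolynomial.C s) := by
    apply Subtype.ext
    exact (hPC s).symm
  let W := Localization.Away sD
  let : Algebra E W := ((algebraMap D W).comp (algebraMap E D)).toAlgebra
  have hEW : ∀ x : E, algebraMap E W x = algebraMap D W x := fun _ => rfl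
  have hDW : Function.Injective (algebraMap D W) :=
    IsLocalization.injective _ (powers_le_nonZeroDivisors_of_noZeroDivisors hsD0)
  have hW : IsLocalization.Away sE W := by
    refine ⟨⟨?_, ?_, ?_⟩⟩
    · rintro ⟨_, k, rfl⟩
      rw [hEW]
      exact IsLocalization.map_units (M := Submonoid.powers sD) W ⟨sD ^ k, k, rfl⟩
    · intro z
      obtain ⟨⟨d, _, k, rfl⟩, hd⟩ := IsLocalization.surj (Submonoid.powers sD) z
      obtain ⟨N, hN⟩ := hpow d
      refine ⟨⟨⟨sD ^ N * d, hN⟩, ⟨sE ^ (N + k), N + k, rfl⟩⟩, ?_⟩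
      simp only [hEW] at hd ⊢
      rw [map_mul, ← hd]
      simp [sE]
      ring
    · intro x y hxy
      refine ⟨1, ?_⟩
      rw [hEW, hEW] at hxy
      rw [Subtype.ext (hDW hxy)]
  have hunit : IsUnit ((Algebra.TensorProduct.includeRight : E →ₐ[P] R ⊗[P] E).toRingHom sE) := by
    have : (Algebra.TensorProduct.includeRight : E →ₐ[P] R ⊗[P] E).toRingHom sE =
        (algebraMap R (R ⊗[P] E)) (MvPolynomial.C (θ s)) := by
      change (1 : R) ⊗ₜ[P] sE = (MvPolynomial.C (θ s) : R) ⊗ₜ[P] (1 : E)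
      rw [hsE, ← Algebra.TensorProduct.tmul_one_eq_one_tmul, hPR, MvPolynomial.map_C]
    rw [this]
    exact ((IsUnit.mk0 _ hθs).map MvPolynomial.C).map _
  let lW : W →+* R ⊗[P] E := IsLocalization.Away.lift sE hunit
  have hlW : ∀ e : E, lW (algebraMap D W e) = 1 ⊗ₜ e := by
    intro e
    exact IsLocalization.Away.lift_eq sE hunit e
  obtain ⟨φ, hφ1, hφ2⟩ := exists_tensor_hom (A := A₀) (B := κ) (B' := D)
    ((algebraMap R (R ⊗[P] E)).comp MvPolynomial.C) (lW.comp (algebraMap D W)) (by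
      intro x
      have h1 : algebraMap A₀ D x =
          ((algebraMap P E (MvPolynomial.C (Ideal.Quotient.mk p x)) : E) : D) :=
        (hPC (Ideal.Quotient.mk p x)).symm
      simp only [RingHom.comp_apply]
      rw [h1, hlW, ← Algebra.TensorProduct.tmul_one_eq_one_tmul, hPR, MvPolynomial.map_C, hθ]
      rfl)
  obtain ⟨ψ, hψ1, hψ2⟩ := exists_tensor_hom (A := P) (B := R) (B' := E)
    (MvPolynomial.eval₂Hom (algebraMap κ (κ ⊗[A₀] D)) (fun k => 1 ⊗ₜ u k))
    ((Algebra.TensorProduct.includeRight : D →ₐ[A₀] κ ⊗[A₀] D).toRingHom.comp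
      (algebraMap E D)) (by
      intro x
      have : ((MvPolynomial.eval₂Hom (algebraMap κ (κ ⊗[A₀] D)) (fun k => 1 ⊗ₜ u k))).comp
        (MvPolynomial.map θ) = 
        (Algebra.TensorProduct.includeRight : D →ₐ[A₀] κ ⊗[A₀] D).toRingHom.comp
          (MvPolynomial.aeval (R := A) u).toRingHom := by
        apply MvPolynomial.ringHom_ext
        · intro y
          simp [hθt]
        · intro k
          simp
      exact DFunLike.congr_fun this x)
  have hψs : ∀ e : E, ψ (1 ⊗ₜ e) = 1 ⊗ₜ (e : D) := hψ2
  have hψφ : ψ.comp φ = RingHom.id _ := by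
    have h1 : ∀ d : D, ψ (φ (1 ⊗ₜ d)) = 1 ⊗ₜ d := by
      intro d
      obtain ⟨N, hN⟩ := hpow d
      have hu : IsUnit ((1 : κ) ⊗ₜ[A₀] (sD ^ N)) := by
        rw [hsD, ← map_pow, ← hθt, map_pow]
        exact ((IsUnit.mk0 _ hθs).pow N).map (algebraMap κ (κ ⊗[A₀] D))
      apply hu.mul_left_cancel
      have e1 : ψ (φ (1 ⊗ₜ (sD ^ N))) = 1 ⊗ₜ (sD ^ N) := by
        rw [hφ2, RingHom.comp_apply]
        exact (congrArg ψ (hlW (sE ^ N))).trans (hψs _)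
      have e2 : ψ (φ (1 ⊗ₜ (sD ^ N * d))) = 1 ⊗ₜ (sD ^ N * d) := by
        rw [hφ2, RingHom.comp_apply]
        exact (congrArg ψ (hlW ⟨_, hN⟩)).trans (hψs _)
      nth_rw 1 [← e1]
      rw [← map_mul, ← map_mul, Algebra.TensorProduct.tmul_mul_tmul, one_mul, e2]
    apply RingHom.ext
    intro x
    induction x with
    | zero => simp
    | add x y hx hy => rw [map_add, hx, hy, map_add]
    | tmul x y =>
      have : x ⊗ₜ[A₀] y = (x ⊗ₜ 1) * (1 ⊗ₜ y) := by simp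
      rw [this, map_mul, map_mul]
      congr 1
      · rw [RingHom.comp_apply, hφ1]
        refine (hψ1 _).trans ?_
        exact MvPolynomial.eval₂Hom_C _ _ _
      · exact h1 y
  have h3 := hcore R (φ g) (hg.map φ)
  have h4 := congrArg ψ h3
  rw [map_mul, map_pow, map_zero, hψs] at h4
  rwa [← RingHom.comp_apply, hψφ] at h4

lemma alg_main (A B : Type*) [CommRing A] [CommRing B] [Algebra A B] [IsNoetherianRing A]
    [Algebra.FiniteType A B] :
    ∃ n : ℕ, ∀ (κ : Type u) [Field κ] [Algebra A κ] (g : κ ⊗[A] B), IsNilpotent g → g ^ n = 0 := by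
  have : IsNoetherianRing B := Algebra.FiniteType.isNoetherianRing A B
  suffices H : ∀ I : Ideal B, ∃ n : ℕ, ∀ (κ : Type u) [Field κ] [Algebra A κ] (g : κ ⊗[A] B),
      IsNilpotent g →
        g ^ n ∈ I.map (Algebra.TensorProduct.includeRight : B →ₐ[A] κ ⊗[A] B) by
    obtain ⟨n, hn⟩ := H ⊥
    exact ⟨n, fun κ _ _ g hg => by simpa using hn κ g hg⟩
  intro I
  induction I using WellFoundedGT.induction with | ind I ih => ?_
  by_cases hI : I.IsPrime
  · obtain ⟨r, h, hh, H⟩ := dom1 (A₀ := A) (D := B ⧸ I)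
    obtain ⟨h, rfl⟩ := Ideal.Quotient.mk_surjective h
    have hhI : h ∉ I := fun hm => hh (Ideal.Quotient.eq_zero_iff_mem.mpr hm)
    obtain ⟨n, hn⟩ := ih (I ⊔ Ideal.span {h}) (by
      refine lt_of_le_of_ne le_sup_left fun e => hhI ?_
      rw [e]
      exact Ideal.mem_sup_right (Ideal.mem_span_singleton_self h))
    refine ⟨n + r, fun κ _ _ g hg => ?_⟩
    have h1 := hn κ g hg
    rw [Ideal.map_sup, Ideal.map_span, Set.image_singleton, Submodule.mem_sup] at h1
    obtain ⟨y, hy, z, hz, e⟩ := h1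
    obtain ⟨c, rfl⟩ := Ideal.mem_span_singleton.mp hz
    rw [pow_add, ← e, add_mul]
    refine Ideal.add_mem _ (Ideal.mul_mem_right _ _ hy) ?_
    have hk := Algebra.TensorProduct.lTensor_ker (A := κ) (Ideal.Quotient.mkₐ A I)
      (Ideal.Quotient.mkₐ_surjective A I)
    have hker : RingHom.ker (Ideal.Quotient.mkₐ A I) = I := by
      ext z; exact Ideal.Quotient.eq_zero_iff_mem
    rw [hker] at hk
    rw [← hk, RingHom.mem_ker]
    have h2 := H κ (Algebra.TensorProduct.map (AlgHom.id A κ) (Ideal.Quotient.mkₐ A I) g)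
      (hg.map _)
    rw [map_mul, map_mul, map_pow, mul_right_comm]
    have h3 : (Algebra.TensorProduct.map (AlgHom.id A κ) (Ideal.Quotient.mkₐ A I))
      (Algebra.TensorProduct.includeRight h) = 1 ⊗ₜ (Ideal.Quotient.mk I h) := by simp
    rw [h3, h2, zero_mul]
  · rw [Ideal.not_isPrime_iff] at hI
    rcases hI with rfl | ⟨x, hx, y, hy, hxy⟩
    · exact ⟨0, fun κ _ _ g hg => by simp [Ideal.map_top]⟩
    · have hlt : ∀ x ∉ I, I < I ⊔ Ideal.span {x} := fun x hx => by
        refine lt_of_le_of_ne le_sup_left fun e => hx ?_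
        rw [e]
        exact Ideal.mem_sup_right (Ideal.mem_span_singleton_self x)
      obtain ⟨n, hn⟩ := ih _ (hlt x hx)
      obtain ⟨m, hm⟩ := ih _ (hlt y hy)
      refine ⟨n + m, fun κ _ _ g hg => ?_⟩
      rw [pow_add]
      have h1 := Ideal.mul_mem_mul (hn κ g hg) (hm κ g hg)
      rw [← Ideal.map_mul] at h1
      refine Ideal.map_mono ?_ h1
      rw [Ideal.sup_mul, Ideal.mul_sup, Ideal.mul_sup, Ideal.span_singleton_mul_span_singleton]
      refine sup_le (sup_le Ideal.mul_le_right Ideal.mul_le_left) (sup_le ?_ ?_)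
      · exact Ideal.mul_le.mpr fun r _ s hs => I.mul_mem_left r hs
      · rwa [Ideal.span_singleton_le_iff_mem]

/-- every nilpotent element of the ring has vanishing nth power -/
def NilLE (R : Type*) [CommRing R] (n : ℕ) : Prop := ∀ a : R, IsNilpotent a → a ^ n = 0

lemma NilLE.mono {R : Type*} [CommRing R] {n m : ℕ} (h : NilLE R n) (hnm : n ≤ m) : NilLE R m :=
  fun a ha => pow_eq_zero_of_le hnm (h a ha)

lemma NilLE.of_injective {R S : Type*} [CommRing R] [CommRing S] {n : ℕ} (h : NilLE S n)
    (f : R →+* S) (hf : Function.Injective f) : NilLE R n := fun a ha => by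
  apply hf
  rw [map_pow, map_zero]
  exact h _ (ha.map f)

lemma NilLE.localization {R S : Type*} [CommRing R] [CommRing S] [Algebra R S] {n : ℕ}
    (h : NilLE R n) (P : Submonoid R) [IsLocalization P S] : NilLE S n := by
  rintro a ⟨m, hm⟩
  obtain ⟨c, s, rfl⟩ := IsLocalization.exists_mk'_eq P a
  rw [← IsLocalization.mk'_pow, IsLocalization.mk'_eq_zero_iff] at hm
  obtain ⟨t, ht⟩ := hm
  rw [← IsLocalization.mk'_pow, IsLocalization.mk'_eq_zero_iff]
  refine ⟨t ^ n, ?_⟩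
  have : IsNilpotent (t.1 * c) := ⟨m + 1, by
    rw [mul_pow, pow_succ, pow_succ c, show t.1 ^ m * t.1 * (c ^ m * c) = t.1 ^ m * (t.1 * c ^ m) * c by ring, ht]; simp⟩
  have := h _ this
  rwa [mul_pow] at this

lemma radLE_of_stalk (X : Scheme.{u}) (n : ℕ) (h : ∀ y : X, NilLE (X.presheaf.stalk y) n) :
    X.radicalIndexLE n := by
  intro U g hg
  apply TopCat.Presheaf.section_ext X.sheaf U
  intro y hy
  change X.presheaf.germ U y hy (g ^ n) = X.presheaf.germ U y hy 0
  rw [map_pow, map_zero]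
  exact h y _ (hg y hy)

lemma nil_stalk_spec (R : CommRingCat.{u}) (n : ℕ) (h : NilLE R n) (y : Spec R) :
    NilLE ((Spec R).presheaf.stalk y) n := by
  have aux (p : PrimeSpectrum R) : NilLE ((Spec.structureSheaf R).presheaf.stalk p) n :=
    NilLE.localization h p.asIdeal.primeCompl
  exact aux y

lemma nil_stalk_openImm {X Y : Scheme.{u}} (f : X ⟶ Y) [IsOpenImmersion f] (n : ℕ)
    (h : ∀ x : X, NilLE (X.presheaf.stalk x) n) (y : Y) (hy : y ∈ Set.range f) :
    NilLE (Y.presheaf.stalk y) n := by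
  obtain ⟨x, rfl⟩ := hy
  exact (h x).of_injective (f.stalkMap x).hom
    (ConcreteCategory.bijective_of_isIso (f.stalkMap x)).1

lemma local_bound {H M : Scheme.{u}} (π : H ⟶ M) {U : M.Opens} (hU : IsAffineOpen U)
    {V : H.Opens} (hV : IsAffineOpen V) (e : V ≤ π ⁻¹ᵁ U) [LocallyOfFiniteType π]
    [IsLocallyNoetherian M] : ∃ n : ℕ, ∀ (x : M) (hx : x ∈ U)
      (y : (pullback π (M.fromSpecResidueField x) : Scheme)),
      pullback.fst π (M.fromSpecResidueField x) y ∈ V →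
      NilLE ((pullback π (M.fromSpecResidueField x)).presheaf.stalk y) n := by
  letI : Algebra Γ(M, U) Γ(H, V) := (π.appLE U V e).hom.toAlgebra
  have : Algebra.FiniteType Γ(M, U) Γ(H, V) := π.finiteType_appLE hU hV e
  have : IsNoetherianRing Γ(M, U) := IsLocallyNoetherian.component_noetherian ⟨U, hU⟩
  obtain ⟨n, hn⟩ := alg_main.{u} Γ(M, U) Γ(H, V)
  refine ⟨n, fun x hx y hy => ?_⟩
  let ι := M.fromSpecResidueField x
  let l : Spec (M.residueField x) ⟶ Spec Γ(M, U) := IsOpenImmersion.lift hU.fromSpec ι (by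
    rw [Scheme.range_fromSpecResidueField, hU.range_fromSpec]
    simpa using hx)
  have hl : l ≫ hU.fromSpec = ι := IsOpenImmersion.lift_fac _ _ _
  let φ := Spec.preimage l
  have hφ : Spec.map φ = l := Spec.map_preimage l
  letI : Algebra Γ(M, U) (M.residueField x) := φ.hom.toAlgebra
  have hnil : NilLE (Γ(H, V) ⊗[Γ(M, U)] (M.residueField x)) n :=
    NilLE.of_injective (S := (M.residueField x) ⊗[Γ(M, U)] Γ(H, V)) (fun a ha => hn _ a ha)
      (Algebra.TensorProduct.comm Γ(M, U) Γ(H, V) (M.residueField x)).toRingEquiv.toRingHom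
      (Algebra.TensorProduct.comm Γ(M, U) Γ(H, V) (M.residueField x)).injective
  let j := pullback.map (Spec.map (CommRingCat.ofHom (algebraMap Γ(M, U) Γ(H, V))))
      (Spec.map (CommRingCat.ofHom (algebraMap Γ(M, U) (M.residueField x)))) π ι
      hV.fromSpec (𝟙 _) hU.fromSpec (hU.SpecMap_appLE_fromSpec π hV e)
      (by rw [Category.id_comp, ← hl, ← hφ]; rfl)
  refine nil_stalk_openImm ((pullbackSpecIso Γ(M, U) Γ(H, V) (M.residueField x)).inv ≫ j) n
    (nil_stalk_spec _ n hnil) y ?_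
  obtain ⟨z, hz⟩ : y ∈ Set.range j := by
    rw [Scheme.Pullback.range_map]
    refine ⟨?_, ?_⟩
    · rw [hV.range_fromSpec]; exact hy
    · simp
  refine ⟨(pullbackSpecIso Γ(M, U) Γ(H, V) (M.residueField x)).hom z, ?_⟩
  rw [← Scheme.Hom.comp_apply, Iso.hom_inv_id_assoc, hz]

lemma global_bound {H M : Scheme.{u}} (π : H ⟶ M) [LocallyOfFiniteType π]
    [IsLocallyNoetherian M] [CompactSpace H] : ∃ n : ℕ, 0 < n ∧ ∀ x : M,
      (pullback π (M.fromSpecResidueField x)).radicalIndexLE n := by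
  have key : ∀ h : H, ∃ (V : H.Opens) (n : ℕ), h ∈ V ∧ ∀ (x : M)
      (y : (pullback π (M.fromSpecResidueField x) : Scheme)),
      pullback.fst π (M.fromSpecResidueField x) y ∈ V →
      NilLE ((pullback π (M.fromSpecResidueField x)).presheaf.stalk y) n := by
    intro h
    obtain ⟨U, hU, hhU, -⟩ := exists_isAffineOpen_mem_and_subset
      (TopologicalSpace.Opens.mem_top (π h))
    obtain ⟨V, hV, hhV, e⟩ := exists_isAffineOpen_mem_and_subset (U := π ⁻¹ᵁ U) hhU
    obtain ⟨n, hn⟩ := local_bound π hU hV e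
    refine ⟨V, n, hhV, fun x y hy => hn x ?_ y hy⟩
    have h1 : π (pullback.fst π (M.fromSpecResidueField x) y) ∈ U := e hy
    rw [← Scheme.Hom.comp_apply, pullback.condition, Scheme.Hom.comp_apply] at h1
    have h2 : M.fromSpecResidueField x (pullback.snd π (M.fromSpecResidueField x) y) ∈
      Set.range (M.fromSpecResidueField x) := ⟨_, rfl⟩
    rw [Scheme.range_fromSpecResidueField, Set.mem_singleton_iff] at h2
    rwa [h2] at h1
  choose V n hV hn using key
  obtain ⟨t, ht⟩ := isCompact_univ.elim_finite_subcover (fun h => (V h : Set H))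
    (fun h => (V h).isOpen) (fun h _ => Set.mem_iUnion.mpr ⟨h, hV h⟩)
  refine ⟨t.sup n + 1, by omega, fun x => radLE_of_stalk _ _ fun y => ?_⟩
  obtain ⟨h, hh, hy⟩ := Set.mem_iUnion₂.mp (ht (Set.mem_univ
    (pullback.fst π (M.fromSpecResidueField x) y)))
  exact (hn h x y hy).mono ((Finset.le_sup hh).trans (Nat.le_succ _))

end AlgHelpers

/-- Proposition 4.4 of the paper.  Let `k` be an algebraically closed field,
`G` and `M` finite type `k`-schemes and `ρ : G ×_k M → M` a morphism over `k` (e.g. a group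
action).  Let `H` be the fiber product of `(ρ, pr₂) : G ×_k M → M ×_k M` with the diagonal
`Δ : M → M ×_k M`, and `π : H → M` the induced projection, whose fiber over a closed point
`x ∈ M(k)` is the isotropy subgroup scheme `G_x` when `ρ` is a group action.  Then there is a
positive integer `N₁` bounding the radical index of every fiber of `π` over a closed point. -/
theorem exists_uniform_radical_index_bound_of_isotropy
    (k : Type*) [Field k] [IsAlgClosed k]
    (G M : Scheme) (sG : G ⟶ Spec (CommRingCat.of k)) (sM : M ⟶ Spec (CommRingCat.of k))
    [LocallyOfFiniteType sG] [QuasiCompact sG]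
    [LocallyOfFiniteType sM] [QuasiCompact sM]
    (ρ : pullback sG sM ⟶ M) (hρ : ρ ≫ sM = pullback.snd sG sM ≫ sM) :
    ∃ N₁ : ℕ, 0 < N₁ ∧
      ∀ x : M, IsClosed ({x} : Set M) →
        (pullback
            (pullback.snd (pullback.lift ρ (pullback.snd sG sM) hρ) (pullback.diagonal sM))
            (M.fromSpecResidueField x)).radicalIndexLE N₁ := by
  have : IsLocallyNoetherian M := LocallyOfFiniteType.isLocallyNoetherian sM
  have : QuasiCompact (pullback.diagonal sM) := inferInstance
  have hf : LocallyOfFiniteType (pullback.snd sG sM ≫ sM) := inferInstance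
  have h1 : LocallyOfFiniteType (pullback.lift ρ (pullback.snd sG sM) hρ) := by
    have : LocallyOfFiniteType (pullback.lift ρ (pullback.snd sG sM) hρ ≫
      (pullback.snd sM sM ≫ sM)) := by
      rw [← Category.assoc, pullback.lift_snd]; exact hf
    exact locallyOfFiniteType_of_comp _ (pullback.snd sM sM ≫ sM)
  have : QuasiCompact (pullback.fst (pullback.lift ρ (pullback.snd sG sM) hρ)
    (pullback.diagonal sM) ≫ (pullback.snd sG sM ≫ sM)) := inferInstance
  have : CompactSpace (pullback (pullback.lift ρ (pullback.snd sG sM) hρ)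
    (pullback.diagonal sM) : Scheme) := QuasiCompact.compactSpace_of_compactSpace
      (pullback.fst (pullback.lift ρ (pullback.snd sG sM) hρ)
    (pullback.diagonal sM) ≫ (pullback.snd sG sM ≫ sM))
  obtain ⟨n, hn0, hn⟩ := global_bound
    (pullback.snd (pullback.lift ρ (pullback.snd sG sM) hρ) (pullback.diagonal sM))
  exact ⟨n, hn0, fun x _ => hn x⟩
end

section
/- Let K be a separably closed field of characteristic p > 0, let K̄ be an algebraic closure of K, and for an integer n ≥ 0 let K^{p^{-n}} denote the intermediate field {x ∈ K̄ : x^{p^n} ∈ K}. Let A be a nonzero finitely generated commutative K-algebra such that every nilpotent element f of A ⊗_K K̄ satisfies f^{p^n} = 0. Then A admits a K^{p^{-n}}-rational point; that is, there exists a K-algebra homomorphism A → K^{p^{-n}}. -/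
open TensorProduct

/-- The purely inseparable extension `K^{p^{-n}} = {x ∈ K̄ : x^{pⁿ} ∈ K}` of exponent `n`
of `K` inside a fixed algebraic closure `K̄`, as a `K`-subalgebra of `K̄`. -/
def pInsepClosure (K : Type*) [Field K] (p : ℕ) [Fact p.Prime] [CharP K p] (n : ℕ) :
    Subalgebra K (AlgebraicClosure K) where
  carrier := {x | x ^ p ^ n ∈ (algebraMap K (AlgebraicClosure K)).range}
  mul_mem' := by
    rintro a b ⟨x, hx⟩ ⟨y, hy⟩
    exact ⟨x * y, by rw [map_mul, hx, hy, mul_pow]⟩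
  add_mem' := by
    rintro a b ⟨x, hx⟩ ⟨y, hy⟩
    exact ⟨x + y, by rw [map_add, hx, hy, add_pow_char_pow]⟩
  algebraMap_mem' := fun c => ⟨c ^ p ^ n, map_pow _ _ _⟩


lemma ptL1 {K R F : Type*} [Field K] [CommRing R] [IsDomain R] [Field F] [Algebra K R]
    [Algebra R F] [Algebra K F] [IsScalarTower K R F] [IsFractionRing R F]
    (h : ∀ d : R, d ≠ 0 → ∃ φ : R →ₐ[K] K, φ d ≠ 0) (T : Finset F) :
    ∃ O : Subalgebra K F, (T : Set F) ⊆ O ∧ Nonempty (O →ₐ[K] K) := by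
  obtain ⟨⟨d, hd⟩, hdT⟩ := IsLocalization.exist_integer_multiples_of_finset (nonZeroDivisors R) T
  have hd0 : d ≠ 0 := nonZeroDivisors.ne_zero hd
  have hdF : algebraMap R F d ≠ 0 := by
    simpa using (IsFractionRing.injective R F).ne hd0
  obtain ⟨φ, hφ⟩ := h d hd0
  have hle : Submonoid.powers d ≤ nonZeroDivisors R := by
    simpa [Submonoid.powers_le] using hd0
  let ψ : Localization.Away d →ₐ[R] F := IsLocalization.liftAlgHom (M := Submonoid.powers d)
    (f := Algebra.ofId R F) (by
      rintro ⟨y, k, rfl⟩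
      simpa [Algebra.ofId_apply] using (pow_ne_zero k hdF))
  have hψ : Function.Injective ψ := by
    rw [injective_iff_map_eq_zero]
    intro x hx
    obtain ⟨r, s, rfl⟩ := IsLocalization.exists_mk'_eq (Submonoid.powers d) x
    have : algebraMap R F r = 0 := by
      have h1 := congrArg ψ (IsLocalization.mk'_spec (Localization.Away d) r s)
      rw [map_mul, hx, zero_mul, AlgHom.commutes] at h1
      exact h1.symm
    have : r = 0 := (IsFractionRing.injective R F) (by simpa using this)
    simp [this]
  let θ : Localization.Away d →ₐ[K] K := IsLocalization.liftAlgHom (M := Submonoid.powers d)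
    (f := φ) (by
      rintro ⟨y, k, rfl⟩
      simpa using (pow_ne_zero k hφ))
  let ψ' := ψ.restrictScalars K
  have hψ' : Function.Injective ψ' := hψ
  refine ⟨ψ'.range, ?_, ⟨θ.comp (AlgEquiv.ofInjective ψ' hψ').symm.toAlgHom⟩⟩
  intro x hx
  obtain ⟨r, hr⟩ := hdT x hx
  refine ⟨IsLocalization.mk' (Localization.Away d) r (⟨d, 1, by simp⟩ : Submonoid.powers d), ?_⟩
  have h1 := congrArg ψ (IsLocalization.mk'_spec (Localization.Away d) r
    (⟨d, 1, by simp⟩ : Submonoid.powers d))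
  rw [map_mul, AlgHom.commutes, AlgHom.commutes, hr] at h1
  apply mul_right_cancel₀ hdF
  refine h1.trans ?_
  rw [Algebra.smul_def, mul_comm]

lemma ptL2 {K F E : Type*} [Field K] [IsSepClosed K] [Field F] [Field E] [Algebra K F]
    [Algebra F E] [Algebra K E] [IsScalarTower K F E] [FiniteDimensional F E]
    [Algebra.IsSeparable F E]
    (h : ∀ T : Finset F, ∃ O : Subalgebra K F, (T : Set F) ⊆ O ∧ Nonempty (O →ₐ[K] K))
    (T : Finset E) :
    ∃ O : Subalgebra K E, (T : Set E) ⊆ O ∧ Nonempty (O →ₐ[K] K) := by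
  classical
  obtain ⟨y, hy⟩ := Field.exists_primitive_element F E
  have hyi : IsIntegral F y := Algebra.IsIntegral.isIntegral y
  have hq : ∀ e : E, ∃ q : Polynomial F, Polynomial.aeval y q = e := by
    intro e
    have : e ∈ IntermediateField.adjoin F {y} := by rw [hy]; trivial
    rwa [← IntermediateField.mem_toSubalgebra,
      IntermediateField.adjoin_simple_toSubalgebra_of_isAlgebraic hyi.isAlgebraic,
      Algebra.adjoin_singleton_eq_range_aeval] at this
  choose q hq using hq
  obtain ⟨u, v, huv⟩ : (minpoly F y).Separable := Algebra.IsSeparable.isSeparable F y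
  obtain ⟨O, hTO, ⟨ε⟩⟩ := h ((minpoly F y).coeffs ∪ u.coeffs ∪ v.coeffs ∪
    T.biUnion (fun e => (q e).coeffs))
  have lift : ∀ g : Polynomial F, (∀ c ∈ g.coeffs, c ∈ O) → g ∈ Polynomial.lifts (algebraMap O F) := by
    intro g hg
    rw [Polynomial.lifts_iff_coeff_lifts]
    intro k
    by_cases hk : g.coeff k = 0
    · exact ⟨0, by simp [hk]⟩
    · exact ⟨⟨_, hg _ (Polynomial.coeff_mem_coeffs hk)⟩, rfl⟩
  have hinj : Function.Injective (algebraMap O F) := Subtype.val_injective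
  obtain ⟨P, hP, hPdeg, hPm⟩ := Polynomial.lifts_and_natDegree_eq_and_monic
    (lift (minpoly F y) fun c hc => hTO (by simp [hc])) (minpoly.monic hyi)
  obtain ⟨U, hU⟩ := (Polynomial.mem_lifts _).1 (lift u fun c hc => hTO (by simp [hc]))
  obtain ⟨V, hV⟩ := (Polynomial.mem_lifts _).1 (lift v fun c hc => hTO (by simp [hc]))
  have hUV : U * P + V * P.derivative = 1 := by
    apply Polynomial.map_injective _ hinj
    simp [hU, hV, hP, ← Polynomial.derivative_map, huv]
  -- the specialised polynomial
  let P0 : Polynomial K := P.map (ε : O →+* K)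
  have hP0 : P0.Separable := by
    refine ⟨U.map (ε : O →+* K), V.map (ε : O →+* K), ?_⟩
    have := congrArg (Polynomial.map (ε : O →+* K)) hUV
    simpa [P0, Polynomial.derivative_map] using this
  have hdeg : P0.degree ≠ 0 := by
    have h1 : P0.natDegree = (minpoly F y).natDegree := by
      rw [← hPdeg]; exact hPm.natDegree_map _
    have := minpoly.natDegree_pos hyi
    intro h0
    have : P0.natDegree = 0 := Polynomial.natDegree_eq_of_degree_eq_some h0
    omega
  obtain ⟨t, ht⟩ := IsSepClosed.exists_root P0 hdeg hP0
  let ψ : Polynomial O →ₐ[K] E := (Polynomial.aeval (R := O) y).restrictScalars K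
  let θ : Polynomial O →ₐ[K] K := Polynomial.eval₂AlgHom ε t (fun _ => Commute.all _ _)
  have hθP : θ P = 0 := by
    have : P0.eval t = 0 := ht
    rwa [Polynomial.eval_map] at this
  have hψm : ∀ g : Polynomial O, ψ g = Polynomial.aeval y (g.map (algebraMap O F)) := by
    intro g
    simp [ψ, Polynomial.aeval_map_algebraMap]
  have hker : ∀ g : Polynomial O, ψ g = 0 → θ g = 0 := by
    intro g hg
    rw [hψm] at hg
    have h1 := minpoly.dvd F y hg
    rw [← hP, Polynomial.map_dvd_map _ hinj hPm] at h1
    obtain ⟨c, rfl⟩ := h1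
    rw [map_mul, hθP, zero_mul]
  refine ⟨ψ.range, ?_, ?_⟩
  · intro e he
    obtain ⟨Q, hQ⟩ := (Polynomial.mem_lifts _).1 (lift (q e) fun c hc => hTO (by
      simp only [Finset.coe_union, Set.mem_union, Finset.coe_biUnion, Set.mem_iUnion]
      exact Or.inr ⟨e, he, hc⟩))
    refine ⟨Q, ?_⟩
    change ψ Q = e
    rw [hψm, hQ, hq]
  · exact ⟨AlgHom.liftOfSurjective ψ.rangeRestrict ψ.rangeRestrict_surjective θ (by
      intro g hg
      apply hker
      simpa using congrArg Subtype.val (show ψ.rangeRestrict g = 0 from hg))⟩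

lemma ptInf (K : Type*) [Field K] [IsSepClosed K] : Infinite K := by
  by_contra h
  rw [not_infinite_iff_finite] at h
  have : IsAlgClosed K := inferInstance
  exact not_finite K

open scoped IntermediateField.algebraAdjoinAdjoin in
lemma ptL3 {K E : Type*} [Field K] [IsSepClosed K] [Field E] [Algebra K E]
    [Algebra.EssFiniteType K E] (s : Finset E) (hs : IsTranscendenceBasis K ((↑) : s → E))
    (hsep : Algebra.IsSeparable (IntermediateField.adjoin K (s : Set E)) E) (T : Finset E) :
    ∃ O : Subalgebra K E, (T : Set E) ⊆ O ∧ Nonempty (O →ₐ[K] K) := by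
  have := ptInf K
  have : Algebra.EssFiniteType (IntermediateField.adjoin K (s : Set E)) E :=
    Algebra.EssFiniteType.of_comp K _ _
  have : FiniteDimensional (IntermediateField.adjoin K (s : Set E)) E :=
    Algebra.finite_of_essFiniteType_of_isAlgebraic
  refine ptL2 (F := IntermediateField.adjoin K (s : Set E)) (fun T => ?_) T
  refine ptL1 (R := Algebra.adjoin K (s : Set E)) ?_ T
  have e0 := hs.1.aevalEquiv
  have hr : Set.range ((↑) : s → E) = (s : Set E) := by simp
  rw [hr] at e0
  intro d hd
  have hd' : e0.symm d ≠ 0 := by simpa using hd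
  obtain ⟨x, hx⟩ : ∃ x : s → K, MvPolynomial.eval x (e0.symm d) ≠ 0 := by
    by_contra! hc
    exact hd' (MvPolynomial.funext (fun x => by simpa using hc x))
  refine ⟨(MvPolynomial.aeval x).comp e0.symm.toAlgHom, ?_⟩
  simpa [MvPolynomial.aeval_eq_eval] using hx

lemma ptField {R : Type*} [CommRing R] [IsReduced R] (P : Ideal R) [P.IsPrime]
    (h : P ∈ minimalPrimes R) : IsField (Localization.AtPrime P) := by
  have := IsLocalization.subsingleton_primeSpectrum_of_mem_minimalPrimes P h
    (Localization.AtPrime P)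
  have : IsReduced (Localization.AtPrime P) :=
    isReduced_localizationPreserves P.primeCompl _ inferInstance
  rw [IsLocalRing.isField_iff_maximalIdeal_eq]
  rw [eq_bot_iff]
  intro x hx
  have : IsNilpotent x := by
    rw [← mem_nilradical, nilradical_eq_sInf, Ideal.mem_sInf]
    intro J hJ
    have : (⟨J, hJ⟩ : PrimeSpectrum (Localization.AtPrime P)) =
      ⟨IsLocalRing.maximalIdeal _, inferInstance⟩ := Subsingleton.elim _ _
    rw [PrimeSpectrum.ext_iff] at this
    simp only at this
    rwa [this]
  simpa using this.eq_zero

universe u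
lemma ptLI {K : Type*} {B : Type u} [Field K] (p : ℕ) [hp : Fact p.Prime]
    [CommRing B] [Algebra K B]
    (HB : ∀ (ι : Type u) [Fintype ι] (b : ι → B), LinearIndependent K b →
      LinearIndependent K (fun i => b i ^ p)) (P : Ideal B) [P.IsPrime]
    {ι : Type u} [Fintype ι] (e : ι → Localization.AtPrime P) (he : LinearIndependent K e) :
    LinearIndependent K (fun i => e i ^ p) := by
  obtain ⟨d, hd⟩ := IsLocalization.exist_integer_multiples_of_finite P.primeCompl e
  choose b hb using hd
  have hmap : ∀ (c : K) (x : B), algebraMap B (Localization.AtPrime P) (c • x) =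
      c • algebraMap B (Localization.AtPrime P) x := fun c x =>
    map_smul (Algebra.algHom K B (Localization.AtPrime P)) c x
  rw [Fintype.linearIndependent_iff] at he ⊢
  intro g hg
  have h1 : algebraMap B (Localization.AtPrime P) (∑ i, g i • b i ^ p) = 0 := by
    have : algebraMap B (Localization.AtPrime P) (∑ i, g i • b i ^ p) =
        algebraMap B (Localization.AtPrime P) d ^ p * ∑ i, g i • e i ^ p := by
      rw [map_sum, Finset.mul_sum]
      refine Finset.sum_congr rfl fun i _ => ?_
      rw [hmap, map_pow, hb, Algebra.smul_def (d : B), mul_pow, mul_smul_comm]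
    rw [this, hg, mul_zero]
  obtain ⟨t, ht⟩ := (IsLocalization.map_eq_zero_iff P.primeCompl _ _).1 h1
  have h2 : ∑ i, g i • ((t : B) * b i) ^ p = 0 := by
    have : ∑ i, g i • ((t : B) * b i) ^ p = (t : B) ^ (p - 1) * (t * ∑ i, g i • b i ^ p) := by
      rw [← mul_assoc, pow_sub_one_mul hp.out.ne_zero, Finset.mul_sum]
      refine Finset.sum_congr rfl fun i _ => ?_
      rw [mul_pow, mul_smul_comm]
    rw [this, ht, mul_zero]
  refine Fintype.linearIndependent_iff.1 (HB ι (fun i => (t : B) * b i) ?_) g h2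
  rw [Fintype.linearIndependent_iff]
  intro h hh
  apply he h
  have h3 := congrArg (algebraMap B (Localization.AtPrime P)) hh
  have hu : IsUnit (algebraMap B (Localization.AtPrime P) (t * d)) :=
    IsLocalization.map_units _ (t * d)
  rw [← hu.mul_right_eq_zero, ← map_zero (algebraMap B (Localization.AtPrime P)), ← h3, map_sum,
    Finset.mul_sum]
  refine Finset.sum_congr rfl fun i _ => ?_
  rw [hmap, map_mul, map_mul, hb, Algebra.smul_def (d : B), mul_smul_comm, mul_assoc]

lemma ptL4 {K : Type*} {B : Type u} [Field K] [IsSepClosed K] (p : ℕ) [hp : Fact p.Prime]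
    [CharP K p] [CommRing B] [Nontrivial B] [Algebra K B] [Algebra.FiniteType K B]
    (HB : ∀ (ι : Type u) [Fintype ι] (b : ι → B), LinearIndependent K b →
      LinearIndependent K (fun i => b i ^ p)) : Nonempty (B →ₐ[K] K) := by
  classical
  have hred : IsReduced B := by
    rw [isReduced_iff_pow_one_lt p hp.out.one_lt]
    intro b hb
    by_contra hb0
    have h1 := HB PUnit (fun _ => b) (LinearIndependent.of_subsingleton PUnit.unit hb0)
    exact h1.ne_zero PUnit.unit hb
  obtain ⟨P, hP⟩ := Ideal.nonempty_minimalPrimes (I := (⊥ : Ideal B)) bot_ne_top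
  have hPp : P.IsPrime := hP.1.1
  let _ : Field (Localization.AtPrime P) := (ptField P hP).toField
  have : ExpChar K p := .prime hp.out
  obtain ⟨s, hs, hsep⟩ :=
    exists_isTranscendenceBasis_and_isSeparable_of_linearIndepOn_pow_of_essFiniteType
    (k := K) (K := Localization.AtPrime P) p hp.out (by
      intro s hs
      exact ptLI p HB P (fun x : s => (x : Localization.AtPrime P)) hs)
  obtain ⟨G, hG⟩ := ‹Algebra.FiniteType K B›
  let f : B →ₐ[K] Localization.AtPrime P := Algebra.algHom K B _
  obtain ⟨O, hGO, ⟨ε⟩⟩ := ptL3 s hs hsep (G.image f)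
  have hle : f.range ≤ O := by
    rw [← Algebra.map_top, ← hG, AlgHom.map_adjoin, Algebra.adjoin_le_iff]
    simpa using hGO
  exact ⟨ε.comp ((Subalgebra.inclusion hle).comp f.rangeRestrict)⟩

lemma ptHB (K : Type*) [Field K] (p : ℕ) [hp : Fact p.Prime] [CharP K p] (n : ℕ)
    (A : Type u) [CommRing A] [Algebra K A] (S : Set A)
    (hrad : ∀ f : A ⊗[K] AlgebraicClosure K, IsNilpotent f → f ^ p ^ n = 0)
    (ι : Type u) [Fintype ι] (b : ι → Algebra.adjoin K ((fun a => a ^ p ^ n) '' S))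
    (hb : LinearIndependent K b) : LinearIndependent K (fun i => b i ^ p) := by
  have : CharP (AlgebraicClosure K) p := inferInstance
  rw [Fintype.linearIndependent_iff]
  intro g hg
  by_cases hA : Subsingleton A
  · have : Subsingleton (Algebra.adjoin K ((fun a => a ^ p ^ n) '' S)) := inferInstance
    intro i
    exact absurd (Subsingleton.elim _ _) (hb.ne_zero i)
  rw [not_subsingleton_iff_nontrivial] at hA
  have : CharP A p := charP_of_injective_algebraMap (algebraMap K A).injective p
  have : Nontrivial (A ⊗[K] AlgebraicClosure K) := inferInstance
  have : CharP (A ⊗[K] AlgebraicClosure K) p :=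
    charP_of_injective_algebraMap (algebraMap K (A ⊗[K] AlgebraicClosure K)).injective p
  let Fr := iterateFrobenius (A ⊗[K] AlgebraicClosure K) p n
  have hγ : ∀ γ : AlgebraicClosure K, (1 : A) ⊗ₜ[K] γ ∈ Fr.range := by
    intro γ
    obtain ⟨z, hz⟩ := IsAlgClosed.exists_pow_nat_eq γ (pow_pos hp.out.pos n)
    exact ⟨1 ⊗ₜ z, by simp [Fr, iterateFrobenius_def, Algebra.TensorProduct.tmul_pow, hz]⟩
  have hB : ∀ x ∈ Algebra.adjoin K ((fun a => a ^ p ^ n) '' S),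
      x ⊗ₜ[K] (1 : AlgebraicClosure K) ∈ Fr.range := by
    intro x hx
    induction hx using Algebra.adjoin_induction with
    | mem x hx =>
      obtain ⟨a, -, rfl⟩ := hx
      exact ⟨a ⊗ₜ 1, by simp [Fr, iterateFrobenius_def, Algebra.TensorProduct.tmul_pow]⟩
    | algebraMap r =>
      rw [Algebra.algebraMap_eq_smul_one, TensorProduct.smul_tmul]
      exact hγ _
    | add x y _ _ hx hy => rw [TensorProduct.add_tmul]; exact add_mem hx hy
    | mul x y _ _ hx hy =>
      have := mul_mem hx hy
      rwa [Algebra.TensorProduct.tmul_mul_tmul, mul_one] at this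
  choose γ hγp using fun i =>
    IsAlgClosed.exists_pow_nat_eq (algebraMap K (AlgebraicClosure K) (g i)) hp.out.pos
  let f : A ⊗[K] AlgebraicClosure K := ∑ i, (b i : A) ⊗ₜ[K] γ i
  have hf : f ∈ Fr.range := by
    refine sum_mem fun i _ => ?_
    have := mul_mem (hB _ (b i).2) (hγ (γ i))
    rwa [Algebra.TensorProduct.tmul_mul_tmul, mul_one, one_mul] at this
  have hfp : f ^ p = 0 := by
    rw [sum_pow_char]
    have h1 : ∑ i, g i • (b i : A) ^ p = 0 := by
      simpa using congrArg Subtype.val hg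
    have h2 := congrArg (fun x : A => x ⊗ₜ[K] (1 : AlgebraicClosure K)) h1
    simp only [TensorProduct.sum_tmul, TensorProduct.zero_tmul] at h2
    rw [← h2]
    refine Finset.sum_congr rfl fun i _ => ?_
    rw [Algebra.TensorProduct.tmul_pow, hγp, TensorProduct.smul_tmul,
      Algebra.algebraMap_eq_smul_one]
  have hf0 : f = 0 := by
    obtain ⟨x, hx⟩ := hf
    have hx' : x ^ p ^ n = f := hx
    rw [← hx']
    apply hrad
    refine ⟨p ^ n * p, ?_⟩
    rw [pow_mul, hx', hfp]
  have hbA : LinearIndependent K (fun i => (b i : A)) :=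
    hb.map' (Subalgebra.val _).toLinearMap (LinearMap.ker_eq_bot.2 Subtype.val_injective)
  have hγ0 : ∀ i, γ i = 0 := by
    intro i
    obtain ⟨l, hl⟩ := LinearMap.exists_leftInverse_of_injective
      (Finsupp.linearCombination K (fun i => (b i : A))) (LinearMap.ker_eq_bot.2 hbA)
    have hlb : ∀ j, l (b j : A) = Finsupp.single j 1 := by
      intro j
      simpa using LinearMap.congr_fun hl (Finsupp.single j 1)
    have h6 := congrArg (TensorProduct.lid K (AlgebraicClosure K) ∘
      LinearMap.rTensor (AlgebraicClosure K) ((Finsupp.lapply i).comp l)) hf0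
    classical
    simpa [f, hlb, Finsupp.single_apply, ite_smul] using h6
  intro i
  have := hγp i
  rw [hγ0 i, zero_pow hp.out.ne_zero] at this
  simpa using this.symm

/-- Lemma 5.1 / `algebra1` of the paper.  Let `K` be a separably closed field
of characteristic `p > 0` and let `A` be a nonzero finitely generated commutative `K`-algebra
such that every nilpotent element `f` of `A ⊗_K K̄` satisfies `f ^ pⁿ = 0` (radical index at most
`pⁿ`).  Then `A` admits a `K^{p^{-n}}`-rational point, i.e. a `K`-algebra homomorphism
`A → K^{p^{-n}}`. -/
theorem exists_pInsep_point_of_radical_index_le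
    (K : Type*) [Field K] [IsSepClosed K] (p : ℕ) [Fact p.Prime] [CharP K p] (n : ℕ)
    (A : Type*) [CommRing A] [Algebra K A] [Nontrivial A]
    (hfg : Algebra.FiniteType K A)
    (hrad : ∀ f : A ⊗[K] AlgebraicClosure K, IsNilpotent f → f ^ p ^ n = 0) :
    Nonempty (A →ₐ[K] pInsepClosure K p n) := by
  have hp : p.Prime := Fact.out
  have hpn : 0 < p ^ n := pow_pos hp.pos n
  have : CharP A p := charP_of_injective_algebraMap (algebraMap K A).injective p
  obtain ⟨S, hS⟩ := hfg
  let B := Algebra.adjoin K ((fun a : A => a ^ p ^ n) '' (S : Set A))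
  have hBfg : Algebra.FiniteType K B := by
    rw [← Subalgebra.fg_iff_finiteType]
    classical
    refine ⟨S.image (fun a : A => a ^ p ^ n), ?_⟩
    simp [B]
  obtain ⟨χ⟩ : Nonempty (B →ₐ[K] K) := ptL4 p (ptHB K p n A S hrad)
  have hpow : ∀ a : A, a ^ p ^ n ∈ B := by
    intro a
    have ha : a ∈ Algebra.adjoin K (S : Set A) := by rw [hS]; trivial
    induction ha using Algebra.adjoin_induction with
    | mem x hx => exact Algebra.subset_adjoin ⟨x, hx, rfl⟩
    | algebraMap r => rw [← map_pow]; exact B.algebraMap_mem _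
    | add x y _ _ hx hy => rw [add_pow_char_pow]; exact add_mem hx hy
    | mul x y _ _ hx hy => rw [mul_pow]; exact mul_mem hx hy
  have hint : Algebra.IsIntegral B A := ⟨fun a => by
    refine IsIntegral.of_pow hpn ?_
    exact isIntegral_algebraMap (x := (⟨_, hpow a⟩ : B))⟩
  have hker : (RingHom.ker χ).IsPrime := RingHom.ker_isPrime _
  obtain ⟨Q, -, hQ, hQc⟩ := Ideal.exists_ideal_over_prime_of_isIntegral (RingHom.ker χ)
    (⊥ : Ideal A) (by
      rw [← RingHom.ker_eq_comap_bot, (RingHom.injective_iff_ker_eq_bot _).1 Subtype.val_injective]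
      exact bot_le)
  have hval : ∀ a : A, (Ideal.Quotient.mk Q a) ^ p ^ n =
      algebraMap K (A ⧸ Q) (χ ⟨_, hpow a⟩) := by
    intro a
    have h1 : (⟨_, hpow a⟩ : B) - algebraMap K B (χ ⟨_, hpow a⟩) ∈ RingHom.ker χ := by
      simp [RingHom.mem_ker]
    rw [← hQc, Ideal.mem_comap, ← Ideal.Quotient.eq_zero_iff_mem, map_sub, map_sub, sub_eq_zero]
      at h1
    rw [← map_pow]
    exact h1
  have halg : Algebra.IsAlgebraic K (A ⧸ Q) := by
    rw [Algebra.isAlgebraic_iff_isIntegral]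
    refine ⟨fun x => ?_⟩
    obtain ⟨a, rfl⟩ := Ideal.Quotient.mk_surjective x
    refine IsIntegral.of_pow hpn ?_
    rw [hval]
    exact isIntegral_algebraMap
  let Φ : A ⧸ Q →ₐ[K] AlgebraicClosure K := IsAlgClosed.lift
  refine ⟨(Φ.comp (Ideal.Quotient.mkₐ K Q)).codRestrict (pInsepClosure K p n) fun a => ?_⟩
  refine ⟨χ ⟨_, hpow a⟩, ?_⟩
  rw [← Φ.commutes, ← hval, map_pow]
  rfl
end

section
/- Let K be a separably closed field of characteristic p > 0 with algebraic closure K̄, and let K^{p^{-n}} = {x ∈ K̄ : x^{p^n} ∈ K}. Let A be a reduced finitely generated commutative K-algebra such that every nilpotent element f of A ⊗_K K̄ satisfies f^{p^n} = 0, and set A_n = A ⊗_K K^{p^{-n}}. Then the natural inclusion Rad(A_n) ⊗_{K^{p^{-n}}} K̄ ⊆ Rad(A ⊗_K K̄) is an equality: the nilradical of A ⊗_K K̄ is generated by the image of the nilradical of A_n. Equivalently, the quotient A_n / Rad(A_n) is a geometrically reduced K^{p^{-n}}-algebra. -/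
set_option synthInstance.maxHeartbeats 400000

open TensorProduct

theorem sum_pow_q (K : Type*) [Field K] (p : ℕ) [Fact p.Prime] [CharP K p] (n : ℕ)
    {R : Type*} [CommRing R] [Algebra K R] {ι : Type*} (s : Finset ι) (f : ι → R) :
    (∑ i ∈ s, f i) ^ p ^ n = ∑ i ∈ s, f i ^ p ^ n := by
  cases subsingleton_or_nontrivial R
  · exact Subsingleton.elim _ _
  · haveI : CharP R p := charP_of_injective_algebraMap (algebraMap K R).injective p
    exact sum_pow_char_pow p n s f

/-- Let `K` be a separably closed field of characteristic `p > 0`, let `A` be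
a reduced finitely generated `K`-algebra whose base change `A ⊗_K K̄` has radical index at most
`pⁿ`, and set `A_n = A ⊗_K K^{p^{-n}}`.  Then the nilradical of `A ⊗_K K̄` is generated by the
image of the nilradical of `A_n` under the natural map `A_n → A ⊗_K K̄`. -/
theorem nilradical_baseChange_eq_map_nilradical
    (K : Type*) [Field K] [IsSepClosed K] (p : ℕ) [Fact p.Prime] [CharP K p] (n : ℕ)
    (A : Type*) [CommRing A] [Algebra K A] [IsReduced A]
    (hfg : Algebra.FiniteType K A)
    (hrad : ∀ f : A ⊗[K] AlgebraicClosure K, IsNilpotent f → f ^ p ^ n = 0) :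
    Ideal.map
        (Algebra.TensorProduct.map (AlgHom.id K A) (pInsepClosure K p n).val :
          A ⊗[K] (pInsepClosure K p n) →ₐ[K] A ⊗[K] AlgebraicClosure K)
        (nilradical (A ⊗[K] (pInsepClosure K p n)))
      = nilradical (A ⊗[K] AlgebraicClosure K) := by
  classical
  apply le_antisymm
  · rw [Ideal.map_le_iff_le_comap]
    intro x hx
    rw [Ideal.mem_comap, mem_nilradical]
    exact (mem_nilradical.mp hx).map _
  · intro f hf
    have hq : p ^ n ≠ 0 := pow_ne_zero _ (Fact.out : p.Prime).ne_zero
    have hf0 := hrad f (mem_nilradical.mp hf)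
    obtain ⟨s, rfl⟩ := TensorProduct.exists_finset f
    let b := Module.Basis.ofVectorSpace K (AlgebraicClosure K)
    have hroot : ∀ x : AlgebraicClosure K, ∃ y, y ^ p ^ n = x := fun x =>
      IsAlgClosed.exists_pow_nat_eq x (Nat.pos_of_ne_zero hq)
    choose r hr using hroot
    let μ : K → pInsepClosure K p n := fun x =>
      ⟨r (algebraMap K _ x), ⟨x, (hr _).symm⟩⟩
    have hμ : ∀ x, μ x ^ p ^ n = algebraMap K _ x := fun x => Subtype.ext (hr _)
    have hinj : ∀ x y : AlgebraicClosure K, x ^ p ^ n = y ^ p ^ n → x = y := by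
      intro x y h
      haveI : CharP (AlgebraicClosure K) p :=
        charP_of_injective_algebraMap (algebraMap K (AlgebraicClosure K)).injective p
      exact iterateFrobenius_inj (AlgebraicClosure K) p n
        (by simpa [iterateFrobenius_def] using h)
    let J := s.biUnion fun i => (b.repr (i.2 ^ p ^ n)).support
    have hc : ∀ i ∈ s, i.2 = ∑ j ∈ J, (μ (b.repr (i.2 ^ p ^ n) j) : AlgebraicClosure K) * r (b j) := by
      intro i hi
      apply hinj
      rw [sum_pow_q K p n]
      have h1 : ∀ j, ((μ (b.repr (i.2 ^ p ^ n) j) : AlgebraicClosure K) * r (b j)) ^ p ^ n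
          = b.repr (i.2 ^ p ^ n) j • b j := by
        intro j
        rw [mul_pow, hr, Algebra.smul_def]
        congr 1
        exact hr _
      simp only [h1]
      conv_lhs => rw [← b.linearCombination_repr (i.2 ^ p ^ n), Finsupp.linearCombination_apply]
      apply Finsupp.sum_of_support_subset _ (Finset.subset_biUnion_of_mem (fun i : A × AlgebraicClosure K => (b.repr (i.2 ^ p ^ n)).support) hi)
      simp
    have hg : ∀ j, (∑ i ∈ s, i.1 ⊗ₜ[K] μ (b.repr (i.2 ^ p ^ n) j)) ^ p ^ n = 0 := by
      intro j
      rw [sum_pow_q K p n] at hf0 ⊢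
      have h2 := congrArg (fun z => (Algebra.TensorProduct.basis A b).repr z j) hf0
      simp only [Algebra.TensorProduct.tmul_pow, map_sum, Algebra.TensorProduct.basis_repr_tmul,
        Finsupp.coe_finset_sum, Finset.sum_apply, Finsupp.smul_apply, Finsupp.mapRange_apply,
        map_zero, Finsupp.coe_zero, Pi.zero_apply, smul_eq_mul] at h2
      simp only [Algebra.TensorProduct.tmul_pow, hμ]
      rw [← TensorProduct.zero_tmul A (1 : pInsepClosure K p n), ← h2, TensorProduct.sum_tmul]
      refine Finset.sum_congr rfl fun i _ => ?_
      rw [mul_comm, ← Algebra.smul_def, Algebra.algebraMap_eq_smul_one, TensorProduct.tmul_smul,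
        TensorProduct.smul_tmul']
    have hsum : ∑ i ∈ s, i.1 ⊗ₜ[K] i.2 = ∑ j ∈ J,
        (1 ⊗ₜ[K] r (b j)) * Algebra.TensorProduct.map (AlgHom.id K A) (pInsepClosure K p n).val
          (∑ i ∈ s, i.1 ⊗ₜ[K] μ (b.repr (i.2 ^ p ^ n) j)) := by
      simp only [map_sum, Algebra.TensorProduct.map_tmul, Finset.mul_sum,
        Algebra.TensorProduct.tmul_mul_tmul, one_mul]
      rw [Finset.sum_comm]
      refine Finset.sum_congr rfl fun i hi => ?_
      rw [← TensorProduct.tmul_sum]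
      conv_lhs => rw [hc i hi]
      simp [mul_comm]
    rw [hsum]
    refine Ideal.sum_mem _ fun j _ => Ideal.mul_mem_left _ _ (Ideal.mem_map_of_mem _ ?_)
    exact mem_nilradical.mpr ⟨_, hg j⟩
end

section
/- Let C ⊆ B be an inclusion of commutative rings and let q be a positive integer such that b^q ∈ C for every b ∈ B (e.g. q = p^{n₁} when B is of characteristic p and purely inseparable of exponent n₁ over C). Let J ⊆ C be an ideal such that the natural map C/J → B/JB is injective. Suppose n is a positive integer such that every element c ∈ C whose image in C/J is nilpotent satisfies c^n ∈ J. Then every element b ∈ B whose image in B/JB is nilpotent satisfies b^{qn} ∈ JB. (This reduces bounding radical indices of fibers of B over A to bounding those of the subring C when the function field extension of B over C is purely inseparable.) -/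
/-- Let `C ⊆ B` be an inclusion of commutative rings and `q` a positive integer
with `b ^ q ∈ C` for every `b ∈ B`.  Let `J ⊆ C` be an ideal such that the natural map
`C ⧸ J → B ⧸ JB` is injective (i.e. `JB ∩ C = J`).  If every `c ∈ C` nilpotent modulo `J`
satisfies `c ^ n ∈ J`, then every `b ∈ B` nilpotent modulo `JB` satisfies `b ^ (q * n) ∈ JB`. -/
theorem radical_index_reduction_purely_inseparable
    (B : Type*) [CommRing B] (C : Subring B) (q : ℕ) (hq : 0 < q)
    (hpow : ∀ b : B, b ^ q ∈ C)
    (J : Ideal C)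
    (hinj : ∀ c : C, (c : B) ∈ J.map C.subtype → c ∈ J)
    (n : ℕ) (hn : 0 < n)
    (hC : ∀ c : C, IsNilpotent (Ideal.Quotient.mk J c) → c ^ n ∈ J)
    (b : B) (hb : IsNilpotent (Ideal.Quotient.mk (J.map C.subtype) b)) :
    b ^ (q * n) ∈ J.map C.subtype := by
  obtain ⟨m, hm⟩ := hb
  rw [← map_pow, Ideal.Quotient.eq_zero_iff_mem] at hm
  have h : (⟨b ^ q, hpow b⟩ : C) ^ n ∈ J := by
    apply hC
    refine ⟨m, ?_⟩
    rw [← map_pow, Ideal.Quotient.eq_zero_iff_mem]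
    apply hinj
    have e : (((⟨b ^ q, hpow b⟩ : C) ^ m : C) : B) = (b ^ m) ^ q := by
      rw [Subring.coe_pow, ← pow_mul, ← pow_mul, mul_comm]
    rw [e]
    exact Ideal.pow_mem_of_mem _ hm q hq
  have h2 := Ideal.mem_map_of_mem C.subtype h
  rw [map_pow] at h2
  rw [pow_mul]
  exact h2
end

section
/- Let K be a separably closed field and let A be a nonzero finitely generated commutative K-algebra that is geometrically reduced, i.e. A ⊗_K K̄ is reduced for an algebraic closure K̄ of K. Then A admits a K-rational point: there exists a K-algebra homomorphism A → K. -/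
open TensorProduct
theorem fiber_point (K : Type*) [Field K] [IsSepClosed K] (n : ℕ) (B : Type*) [CommRing B]
    [Nontrivial B] [Algebra K B] [Algebra (MvPolynomial (Fin n) K) B]
    [IsScalarTower K (MvPolynomial (Fin n) K) B] [Algebra.Etale (MvPolynomial (Fin n) K) B] :
    Nonempty (B →ₐ[K] K) := by
  classical
  have hinf : Infinite K := by
    by_contra h
    have : Finite K := not_infinite_iff_finite.mp h
    have : IsAlgClosed K := inferInstance
    exact h inferInstance
  have hopen := PrimeSpectrum.isOpenMap_comap_of_hasGoingDown_of_finitePresentation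
    (R := MvPolynomial (Fin n) K) (S := B)
  obtain ⟨q0⟩ : Nonempty (PrimeSpectrum B) := inferInstance
  obtain ⟨_, ⟨_, ⟨g, rfl⟩, rfl⟩, hg0, hg⟩ :=
    PrimeSpectrum.isBasis_basic_opens.exists_subset_of_mem_open
      (Set.mem_range_self (f := PrimeSpectrum.comap (algebraMap (MvPolynomial (Fin n) K) B)) q0)
      hopen.isOpen_range
  have hgne : g ≠ 0 := by
    rintro rfl
    simp at hg0
  obtain ⟨x, hx⟩ : ∃ x, MvPolynomial.eval x g ≠ 0 := by
    by_contra! h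
    exact hgne (MvPolynomial.funext (by simpa using h))
  let ev : MvPolynomial (Fin n) K →ₐ[K] K := MvPolynomial.aeval x
  let m : PrimeSpectrum (MvPolynomial (Fin n) K) := ⟨RingHom.ker ev, RingHom.ker_isPrime ev⟩
  obtain ⟨q, hq⟩ : m ∈ Set.range (PrimeSpectrum.comap (algebraMap (MvPolynomial (Fin n) K) B)) := by
    apply hg
    simpa [m, ev, RingHom.mem_ker, MvPolynomial.aeval_eq_eval] using hx
  let : Algebra (MvPolynomial (Fin n) K) K := ev.toRingHom.toAlgebra
  have hev : ∀ f : MvPolynomial (Fin n) K, algebraMap _ K f = ev f := fun _ => rfl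
  have : IsScalarTower K (MvPolynomial (Fin n) K) K :=
    .of_algebraMap_eq fun r => by rw [hev, AlgHom.commutes]
  have hker : ∀ f, ev f = 0 → algebraMap (MvPolynomial (Fin n) K) B f ∈ q.asIdeal := by
    intro f hf
    have : f ∈ m.asIdeal := hf
    rw [← hq] at this
    exact this
  let φ : K →ₐ[MvPolynomial (Fin n) K] (B ⧸ q.asIdeal) :=
    { (algebraMap K (B ⧸ q.asIdeal)) with
      commutes' := by
        intro f
        change algebraMap K (B ⧸ q.asIdeal) (ev f) = algebraMap _ (B ⧸ q.asIdeal) f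
        have h := hker (f - algebraMap K _ (ev f)) (by simp)
        rw [map_sub, ← IsScalarTower.algebraMap_apply] at h
        exact (Ideal.Quotient.eq.mpr h).symm }
  let ψ : K ⊗[MvPolynomial (Fin n) K] B →ₐ[MvPolynomial (Fin n) K] (B ⧸ q.asIdeal) :=
    Algebra.TensorProduct.productMap φ (IsScalarTower.toAlgHom _ B _)
  have : Nontrivial (K ⊗[MvPolynomial (Fin n) K] B) := ψ.toRingHom.domain_nontrivial
  obtain ⟨P⟩ : Nonempty (PrimeSpectrum (K ⊗[MvPolynomial (Fin n) K] B)) := inferInstance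
  let r := (Algebra.IsFiniteSplit.algHomEquivPrimeSpectrum K
    (K ⊗[MvPolynomial (Fin n) K] B)).symm P
  let r' : K ⊗[MvPolynomial (Fin n) K] B →ₐ[K] K := r
  exact ⟨{ r'.toRingHom.comp (Algebra.TensorProduct.includeRight :
      B →ₐ[MvPolynomial (Fin n) K] K ⊗[MvPolynomial (Fin n) K] B).toRingHom with
    commutes' := by
      intro c
      have h1 : (Algebra.TensorProduct.includeRight :
        B →ₐ[MvPolynomial (Fin n) K] K ⊗[MvPolynomial (Fin n) K] B) (algebraMap K B c) =
          algebraMap K _ c := by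
        rw [IsScalarTower.algebraMap_apply K (MvPolynomial (Fin n) K) B, AlgHom.commutes,
          ← IsScalarTower.algebraMap_apply]
      change r' ((Algebra.TensorProduct.includeRight :
        B →ₐ[MvPolynomial (Fin n) K] K ⊗[MvPolynomial (Fin n) K] B) (algebraMap K B c)) = _
      rw [h1, AlgHom.commutes] }⟩

theorem field_smooth (K L : Type*) [Field K] [Field L] [Algebra K L] [Algebra.EssFiniteType K L]
    (h : IsReduced (AlgebraicClosure K ⊗[K] L)) : Algebra.FormallySmooth K L := by
  obtain _ | ⟨p, hp, hpk⟩ := CharP.exists' K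
  · infer_instance
  have : ExpChar K p := .prime hp.out
  obtain ⟨s, hs, H⟩ :=
    exists_isTranscendenceBasis_and_isSeparable_of_linearIndepOn_pow_of_essFiniteType
      (k := K) (K := L) p hp.out (by
      intro s hs
      have hs' : LinearIndependent K (fun i : s => (i : L)) := hs
      have : LinearIndependent K (fun i : s => (i : L) ^ p) := by
        rw [Fintype.linearIndependent_iff]
        intro c hc
        choose d hd using fun i => IsAlgClosed.exists_pow_nat_eq
          (algebraMap K (AlgebraicClosure K) (c i)) hp.out.pos
        have hch : CharP (AlgebraicClosure K ⊗[K] L) p :=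
          charP_of_injective_algebraMap (algebraMap K _).injective p
        have hx : (∑ i : s, d i ⊗ₜ[K] (i : L)) ^ p = 0 := by
          rw [sum_pow_char]
          simp only [Algebra.TensorProduct.tmul_pow, hd]
          simp only [Algebra.algebraMap_eq_smul_one, TensorProduct.smul_tmul,
            ← TensorProduct.tmul_sum, hc, TensorProduct.tmul_zero]
        have hx0 := pow_eq_zero_iff hp.out.ne_zero |>.mp hx
        have hli := Module.Flat.linearIndependent_one_tmul (S := AlgebraicClosure K) hs'
        rw [Fintype.linearIndependent_iff] at hli
        intro i
        have hi := hli d (by simpa [TensorProduct.smul_tmul'] using hx0) i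
        have := hd i
        rw [hi, zero_pow hp.out.ne_zero] at this
        exact (map_eq_zero _).mp this.symm
      exact this)
  have : Algebra.IsSeparable (↥(IntermediateField.adjoin K (Set.range ((↑) : s → L)))) L := by
    convert! H <;> simp
  exact .of_algebraicIndependent_of_isSeparable hs.1

/-- Let `K` be a separably closed field and `A` a nonzero finitely generated
commutative `K`-algebra which is geometrically reduced (i.e. `A ⊗[K] K̄` is reduced).  Then `A`
admits a `K`-rational point, i.e. a `K`-algebra homomorphism `A → K`. -/
theorem exists_rational_point_of_geometrically_reduced
    (K : Type*) [Field K] [IsSepClosed K]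
    (A : Type*) [CommRing A] [Algebra K A] [Nontrivial A]
    (hfg : Algebra.FiniteType K A)
    (hred : IsReduced (A ⊗[K] AlgebraicClosure K)) :
    Nonempty (A →ₐ[K] K) := by
  have hA : IsReduced A := isReduced_of_injective
    (Algebra.TensorProduct.includeLeft : A →ₐ[K] A ⊗[K] AlgebraicClosure K)
    (Algebra.TensorProduct.includeLeft_injective (algebraMap K _).injective)
  obtain ⟨p, hp⟩ : Nonempty (minimalPrimes A) := Ideal.nonempty_minimalPrimes bot_ne_top
  have : p.IsPrime := hp.1.1
  have hL : IsField (Localization.AtPrime p) := by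
    have : Subsingleton (PrimeSpectrum (Localization.AtPrime p)) :=
      IsLocalization.subsingleton_primeSpectrum_of_mem_minimalPrimes p hp _
    have : Ring.KrullDimLE 0 (Localization.AtPrime p) := by
      unfold Ring.KrullDimLE
      infer_instance
    exact Ring.KrullDimLE.isField_of_isReduced
  have hredL : IsReduced (AlgebraicClosure K ⊗[K] Localization.AtPrime p) := by
    let φ : A ⊗[K] AlgebraicClosure K →ₐ[A] Localization.AtPrime p ⊗[K] AlgebraicClosure K :=
      Algebra.TensorProduct.map (Algebra.ofId A _) (AlgHom.id K _)
    let : Algebra (A ⊗[K] AlgebraicClosure K) (Localization.AtPrime p ⊗[K] AlgebraicClosure K) :=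
      φ.toRingHom.toAlgebra
    have : IsScalarTower A (A ⊗[K] AlgebraicClosure K)
        (Localization.AtPrime p ⊗[K] AlgebraicClosure K) :=
      .of_algebraMap_eq fun a => (φ.commutes a).symm
    have := IsLocalization.tensorProduct_tensorProduct K (AlgebraicClosure K) p.primeCompl
      (Localization.AtPrime p) (by
        ext x
        change φ (1 ⊗ₜ x) = 1 ⊗ₜ x
        simp [φ])
    have : IsReduced (Localization.AtPrime p ⊗[K] AlgebraicClosure K) :=
      isReduced_localizationPreserves
        (Algebra.algebraMapSubmonoid (A ⊗[K] AlgebraicClosure K) p.primeCompl) _ hred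
    exact isReduced_of_injective _ (Algebra.TensorProduct.comm K _ _).injective
  have : Algebra.EssFiniteType K (Localization.AtPrime p) := .comp K A _
  have : Algebra.IsSmoothAt K p := by
    let := hL.toField
    exact field_smooth K (Localization.AtPrime p) hredL
  have : Algebra.FinitePresentation K A := Algebra.FinitePresentation.of_finiteType.mp hfg
  obtain ⟨f, hf, n, _, _, _⟩ := Algebra.IsSmoothAt.exists_isStandardEtale_mvPolynomial
    (R := K) (p := p)
  have : Nontrivial (Localization.Away f) := by
    rw [← not_subsingleton_iff_nontrivial, IsLocalization.subsingleton_iff (M := .powers f)]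
    rintro ⟨k, hk⟩
    exact hf (‹p.IsPrime›.mem_of_pow_mem k (by simp only at hk; rw [hk]; exact p.zero_mem))
  obtain ⟨r⟩ := fiber_point K n (Localization.Away f)
  exact ⟨r.comp (IsScalarTower.toAlgHom K A _)⟩
end
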